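/- Fix d ≥ 1 and consider the ruin model with ruin set L satisfying Assumption 4.1, allocation vector l, and A := l − L ∈ 𝓡. Suppose Assumption 1.1 holds, Assumption 3.1 holds (in particular r > 0 and F ∈ (𝒞∩𝒫_𝒟)_A), the claim vectors {X^(i), i ≥ 1} are QAI_A, and the perturbation process B is independent of all other sources of randomness. Then the infinite-time ruin probability satisfies, as x → ∞, ψ_{l,L}(x; ∞) ∼ ∫_{[0,∞)} P(X e^{−r s} ∈ x·A) ν(ds), where the right-hand side equals Σ_{i=1}^∞ P(X^(i) e^{−r τ_i} ∈ x·A). -/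

import Mathlib

open MeasureTheory ProbabilityTheory Filter Topology Set
open scoped Pointwise ENNReal NNReal

noncomputable section

/-- The family `𝓡` of open increasing subsets of `ℝ^d` with convex complement,
whose closure avoids the origin. -/
def InRfam (d : ℕ) (A : Set (Fin d → ℝ)) : Prop :=
  IsOpen A ∧ (∀ x ∈ A, ∀ z : Fin d → ℝ, (∀ i, 0 ≤ z i) → x + z ∈ A) ∧
    Convex ℝ Aᶜ ∧ (0 : Fin d → ℝ) ∉ closure A

/-- The functional `z ↦ z_A = sup {u > 0 : z ∈ u • A}` (real `sSup`, so `sup ∅ = 0`). -/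
def projA {d : ℕ} (A : Set (Fin d → ℝ)) (z : Fin d → ℝ) : ℝ :=
  sSup {u : ℝ | 0 < u ∧ z ∈ u • A}

/-- The tail `Ḡ_A(x) = P(Z_A > x)` of the one-dimensional distribution `G_A`
associated with a distribution `G` on `ℝ^d` and a set `A ∈ 𝓡`. -/
def tailA {d : ℕ} (A : Set (Fin d → ℝ)) (G : Measure (Fin d → ℝ)) (x : ℝ) : ℝ :=
  (G {z | x < projA A z}).toReal

/-- Product of two measures (via `bind`, no instance assumptions). -/
def mprod {α β : Type*} [MeasurableSpace α] [MeasurableSpace β]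
    (μ : Measure α) (ν : Measure β) : Measure (α × β) :=
  μ.bind fun a => ν.map (Prod.mk a)

/-- Tail at `x` of `Z¹_A + Z²_A` for independent `Z¹ ∼ G₁`, `Z² ∼ G₂`. -/
def tail2A {d : ℕ} (A : Set (Fin d → ℝ)) (G₁ G₂ : Measure (Fin d → ℝ)) (x : ℝ) : ℝ :=
  ((mprod G₁ G₂) {p | x < projA A p.1 + projA A p.2}).toReal

/-- `G ∈ 𝒮_A`: the distribution `G_A` has everywhere positive tail and is
subexponential, i.e. `P(Z¹_A + Z²_A > x) ∼ 2 Ḡ_A(x)` for independent copies. -/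
def SubexpA {d : ℕ} (A : Set (Fin d → ℝ)) (G : Measure (Fin d → ℝ)) : Prop :=
  (∀ x : ℝ, 0 < tailA A G x) ∧
    Tendsto (fun x => tail2A A G G x / tailA A G x) atTop (𝓝 2)

/-- Convolution: the law of the sum of independent draws from `μ` and `ν`. -/
def mconv {d : ℕ} (μ ν : Measure (Fin d → ℝ)) : Measure (Fin d → ℝ) :=
  (mprod μ ν).map fun p => p.1 + p.2

/-- Regression dependence with explicit constants `x₀, K`, in integrated form:
for every index `i`, finite nonempty `J` not containing `i`, level `xi > x₀` and
measurable set `S` of conditioning values all `> x₀`,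
`P(Z_i > xi, (Z_j)_{j∈J} ∈ S) ≤ K · Ḡ_i(xi) · P((Z_j)_{j∈J} ∈ S)`. -/
def RDwith {Ω : Type*} [MeasurableSpace Ω] (P : Measure Ω) (x₀ K : ℝ)
    {ι : Type*} (Z : ι → Ω → ℝ) : Prop :=
  ∀ i : ι, ∀ J : Finset ι, J.Nonempty → i ∉ J → ∀ xi : ℝ, x₀ < xi →
    ∀ S : Set (J → ℝ), MeasurableSet S → (∀ v ∈ S, ∀ j : J, x₀ < v j) →
      (P {ω | xi < Z i ω ∧ (fun j : J => Z j.1 ω) ∈ S}).toReal ≤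
        K * (P {ω | xi < Z i ω}).toReal * (P {ω | (fun j : J => Z j.1 ω) ∈ S}).toReal

/-- Regression dependence (`RD`). -/
def RD {Ω : Type*} [MeasurableSpace Ω] (P : Measure Ω) {ι : Type*} (Z : ι → Ω → ℝ) : Prop :=
  ∃ x₀ > (0 : ℝ), ∃ K > (0 : ℝ), RDwith P x₀ K Z

/-- `RD_A` for random vectors: the projections `Z^{(i)}_A` are `RD`. -/
def RDA {Ω : Type*} [MeasurableSpace Ω] (P : Measure Ω) {d : ℕ} (A : Set (Fin d → ℝ))
    {ι : Type*} (Z : ι → Ω → Fin d → ℝ) : Prop :=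
  RD P fun i ω => projA A (Z i ω)

/-- Quasi asymptotic independence (`QAI`). -/
def QAI {Ω : Type*} [MeasurableSpace Ω] (P : Measure Ω) {ι : Type*} (Z : ι → Ω → ℝ) : Prop :=
  ∀ i j : ι, i ≠ j →
    Tendsto (fun x : ℝ => (P {ω | x < Z i ω ∧ x < Z j ω}).toReal /
      ((P {ω | x < Z i ω}).toReal + (P {ω | x < Z j ω}).toReal)) atTop (𝓝 0)

/-- `QAI_A` for random vectors: the projections `Z^{(i)}_A` are `QAI`. -/
def QAIA {Ω : Type*} [MeasurableSpace Ω] (P : Measure Ω) {d : ℕ} (A : Set (Fin d → ℝ))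
    {ι : Type*} (Z : ι → Ω → Fin d → ℝ) : Prop :=
  QAI P fun i ω => projA A (Z i ω)

/-- The consistent variation class `𝒞` for a tail function `g`. -/
def ClassC (g : ℝ → ℝ) : Prop :=
  Tendsto (fun b : ℝ => limsup (fun x => g (b * x) / g x) atTop) (𝓝[<] (1 : ℝ)) (𝓝 1)

/-- The positively decreasing class `𝒫_𝒟` for a tail function `g`. -/
def ClassPD (g : ℝ → ℝ) : Prop :=
  ∃ v > (1 : ℝ), limsup (fun x => g (v * x) / g x) atTop < 1

/-- Upper Matuszewska index of a tail function. -/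
def Jplus (g : ℝ → ℝ) : ℝ :=
  -limUnder atTop fun v : ℝ => Real.log (liminf (fun x => g (v * x) / g x) atTop) / Real.log v

/-- Lower Matuszewska index of a tail function. -/
def Jminus (g : ℝ → ℝ) : ℝ :=
  -limUnder atTop fun v : ℝ => Real.log (limsup (fun x => g (v * x) / g x) atTop) / Real.log v

/-- `F ∈ MRV(α, μ)` with associated regularly varying tail `Vbar`: `Vbar` is the
tail of a distribution on `ℝ`, regularly varying with index `−α`; `μ` is a nonzero
measure, finite on Borel sets at positive distance from the origin; and
`P(X ∈ x • B)/Vbar x → μ(B)` for all such `B` with `μ(∂B) = 0`. -/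
def IsMRV {d : ℕ} (F : Measure (Fin d → ℝ)) (α : ℝ) (μ : Measure (Fin d → ℝ))
    (Vbar : ℝ → ℝ) : Prop :=
  (∃ V : Measure ℝ, IsProbabilityMeasure V ∧ ∀ x : ℝ, Vbar x = (V (Ioi x)).toReal) ∧
    (∀ᶠ x in atTop, 0 < Vbar x) ∧
    (∀ t : ℝ, 0 < t → Tendsto (fun x => Vbar (t * x) / Vbar x) atTop (𝓝 (t ^ (-α)))) ∧
    μ ≠ 0 ∧
    (∀ B : Set (Fin d → ℝ), MeasurableSet B → (∃ ε > (0 : ℝ), ∀ z ∈ B, ε ≤ ‖z‖) → μ B ≠ ⊤) ∧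
    (∀ B : Set (Fin d → ℝ), MeasurableSet B → (∃ ε > (0 : ℝ), ∀ z ∈ B, ε ≤ ‖z‖) →
      μ (frontier B) = 0 →
      Tendsto (fun x => (F (x • B)).toReal / Vbar x) atTop (𝓝 ((μ B).toReal)))

/-- Second factorial moment measure `α⁽²⁾` of the point process with points `τ i`:
the mean measure of the off-diagonal pairs `(τ i, τ j)`, `i ≠ j`. -/
def secondFactorial {Ω : Type*} [MeasurableSpace Ω] (P : Measure Ω) (τ : ℕ → Ω → ℝ) :
    Measure (ℝ × ℝ) :=
  Measure.sum fun p : {p : ℕ × ℕ // p.1 ≠ p.2} =>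
    P.map fun ω => (τ p.1.1 ω, τ p.1.2 ω)

/-- The product measure `ν × ν`, where `ν(B) = ∑ᵢ P(τᵢ ∈ B)` is the mean measure. -/
def nuProd {Ω : Type*} [MeasurableSpace Ω] (P : Measure Ω) (τ : ℕ → Ω → ℝ) :
    Measure (ℝ × ℝ) :=
  Measure.sum fun p : ℕ × ℕ => mprod (P.map (τ p.1)) (P.map (τ p.2))

/-- Assumption 3.2 at horizon `T` with constant `C`:
`α⁽²⁾(B) ≤ C · (ν × ν)(B)` for every Borel `B ⊆ [0,T]²`. -/
def Assumption32 {Ω : Type*} [MeasurableSpace Ω] (P : Measure Ω) (τ : ℕ → Ω → ℝ)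
    (T C : ℝ) : Prop :=
  ∀ B : Set (ℝ × ℝ), MeasurableSet B → B ⊆ Icc (0 : ℝ) T ×ˢ Icc (0 : ℝ) T →
    secondFactorial P τ B ≤ ENNReal.ofReal C * nuProd P τ B

/-- Discounted aggregate claims up to a finite time `T`. -/
def Dfin {Ω : Type*} {d : ℕ} (r : ℝ) (X : ℕ → Ω → Fin d → ℝ) (τ : ℕ → Ω → ℝ)
    (T : ℝ) (ω : Ω) : Fin d → ℝ :=
  ∑' i : ℕ, Set.indicator {ω' | τ i ω' ≤ T} (fun ω' => Real.exp (-(r * τ i ω')) • X i ω') ω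

/-- Discounted aggregate claims over the infinite time horizon. -/
def Dinf {Ω : Type*} {d : ℕ} (r : ℝ) (X : ℕ → Ω → Fin d → ℝ) (τ : ℕ → Ω → ℝ)
    (ω : Ω) : Fin d → ℝ :=
  ∑' i : ℕ, Real.exp (-(r * τ i ω)) • X i ω

/-- `J_x(T)`: the number of discounted claims entering `x • A` by time `T`. -/
def Jcount {Ω : Type*} {d : ℕ} (r : ℝ) (X : ℕ → Ω → Fin d → ℝ) (τ : ℕ → Ω → ℝ)
    (A : Set (Fin d → ℝ)) (T x : ℝ) (ω : Ω) : ℝ≥0∞ :=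
  ∑' i : ℕ,
    Set.indicator {ω' | τ i ω' ≤ T ∧ Real.exp (-(r * τ i ω')) • X i ω' ∈ x • A}
      (fun _ => (1 : ℝ≥0∞)) ω

/-- Pathwise discounted stochastic integral `∫₀ᵗ e^{−rs} B(ds)
  = e^{−rt} B(t) + r ∫₀ᵗ e^{−rs} B(s) ds`. -/
def discBM {Ω : Type*} (r : ℝ) (Bi : ℝ → Ω → ℝ) (t : ℝ) (ω : Ω) : ℝ :=
  Real.exp (-(r * t)) * Bi t ω + r * ∫ s in (0 : ℝ)..t, Real.exp (-(r * s)) * Bi s ω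

/-- The insurer's surplus process `U(t)`. -/
def surplus {Ω : Type*} {d : ℕ} (r x : ℝ) (l : Fin d → ℝ) (c : Fin d → ℝ → Ω → ℝ)
    (δv : Fin d → ℝ) (Bm : Fin d → ℝ → Ω → ℝ) (X : ℕ → Ω → Fin d → ℝ) (τ : ℕ → Ω → ℝ)
    (t : ℝ) (ω : Ω) : Fin d → ℝ :=
  fun k => x * l k + (∫ s in (0 : ℝ)..t, Real.exp (-(r * s)) * c k s ω)
    + δv k * discBM r (Bm k) t ω - Dfin r X τ t ω k

/-!
Projecting a claim vector to the largest `u` with `X ∈ u • A` is positively homogeneous and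
subadditive, because `L` is a cone with convex complement. Apart from premiums and perturbation,
the ruin event therefore contains the event that some weighted claim `Y i * θ i` exceeds `x`, and is
contained in the event that the sum of the `Y i * θ i` does; here `Y i` is the projected claim and
`θ i = exp (-(r * τ i))`.

Both events have probability asymptotic to the sum of the tails of `Y i * θ i`. The Matuszewska
indices give Potter-type bounds on `P(Y i * θ i > x)` relative to the common tail, and the moment
condition makes them summable in `i`, so that all but finitely many claims can be discarded; among
the remaining ones quasi asymptotic independence excludes two large claims at once, and consistent
variation absorbs the factors `1 ± ε`.

Discounted premiums are bounded. The supremum of the discounted perturbation has polynomial tails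
of every order, by chaining over dyadic points from the Gaussian moments of its increments, whereas
the claim tail decays at most polynomially: the perturbation is negligible at scale `ε x`.
-/

/-! ### Matuszewska indices and Potter bounds -/

lemma forall_ge_of_scaling {Q : ℝ → Prop} {v x₀ : ℝ} (hx₀ : 0 < x₀) (hv : 1 < v)
    (base : ∀ y ∈ Icc x₀ (v * x₀), Q y) (step : ∀ y, x₀ ≤ y → Q y → Q (v * y)) :
    ∀ y, x₀ ≤ y → Q y := by
  have hv₀ : 0 < v := by linarith
  have iterate : ∀ n : ℕ, ∀ z ∈ Icc x₀ (v * x₀), x₀ ≤ v ^ n * z ∧ Q (v ^ n * z) := by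
    intro n z hz
    induction n with
    | zero => simpa using ⟨hz.1, base z hz⟩
    | succ n ih =>
      rw [pow_succ', mul_assoc]
      exact ⟨by nlinarith [ih.1], step _ ih.1 ih.2⟩
  intro y hy
  obtain ⟨n, hn, hn'⟩ := exists_nat_pow_near ((one_le_div hx₀).2 hy) hv
  rw [le_div_iff₀ hx₀] at hn
  rw [div_lt_iff₀ hx₀, pow_succ, mul_assoc] at hn'
  have hz : y / v ^ n ∈ Icc x₀ (v * x₀) :=
    ⟨(le_div_iff₀' (by positivity)).2 hn, (div_le_iff₀' (by positivity)).2 hn'.le⟩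
  simpa only [mul_div_cancel₀ y (pow_pos hv₀ n).ne'] using (iterate n _ hz).2

/-- The lower scaling ratio of a tail `g`, whose exponent of decay in `v` is `Jplus g`. -/
def lowerRatio (g : ℝ → ℝ) (v : ℝ) : ℝ :=
  liminf (fun x => g (v * x) / g x) atTop

/-- The upper scaling ratio of a tail `g`, whose exponent of decay in `v` is `Jminus g`. -/
def upperRatio (g : ℝ → ℝ) (v : ℝ) : ℝ :=
  limsup (fun x => g (v * x) / g x) atTop

/-- Dominated variation of a tail function; only factors `s > 1` matter when `g` is antitone. -/
def DominatedVariation (g : ℝ → ℝ) : Prop :=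
  ∀ s : ℝ, ∃ c > 0, ∀ᶠ x in atTop, c * g x ≤ g (s * x)

section Tail

variable {g : ℝ → ℝ}

lemma ClassC.exists_eventually_le (hpos : ∀ x, 0 < g x) (hC : ClassC g) {η : ℝ} (hη : 0 < η) :
    ∃ b ∈ Ioo (0 : ℝ) 1, ∀ᶠ x in atTop, g (b * x) ≤ (1 + η) * g x := by
  have near_one : ∀ᶠ b in 𝓝[<] (1 : ℝ),
      limsup (fun x => g (b * x) / g x) atTop ∈ Ioo (0 : ℝ) (1 + η) :=
    hC (Ioo_mem_nhds (by norm_num) (by linarith))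
  obtain ⟨b, ⟨hb₀, hb⟩, hb₁⟩ := (near_one.and (Ioo_mem_nhdsLT zero_lt_one)).exists
  -- An unbounded ratio would have the junk value `0` as its `limsup`.
  have bounded : IsBoundedUnder (· ≤ ·) atTop (fun x => g (b * x) / g x) := by
    by_contra unbounded
    have empty : {a : ℝ | ∀ᶠ x in atTop, g (b * x) / g x ≤ a} = ∅ :=
      eq_empty_of_forall_notMem fun a ha => unbounded ⟨a, eventually_map.2 ha⟩
    rw [limsup_eq, empty, Real.sInf_empty] at hb₀
    exact lt_irrefl _ hb₀
  refine ⟨b, hb₁, ?_⟩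
  filter_upwards [eventually_lt_of_limsup_lt hb bounded] with x hx
  exact ((div_lt_iff₀ (hpos x)).1 hx).le

lemma ClassC.dominatedVariation (hpos : ∀ x, 0 < g x) (hanti : Antitone g) (hC : ClassC g) :
    DominatedVariation g := by
  intro s
  obtain ⟨b, ⟨hb₀, hb₁⟩, hb⟩ := hC.exists_eventually_le hpos one_pos
  have iterate : ∀ n : ℕ, ∀ᶠ x in atTop, (1 / 2 : ℝ) ^ n * g x ≤ g (b⁻¹ ^ n * x) := by
    intro n
    induction n with
    | zero => simp
    | succ n ih =>
      have scale : Tendsto (fun x : ℝ => b⁻¹ ^ (n + 1) * x) atTop atTop :=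
        tendsto_id.const_mul_atTop (by positivity)
      filter_upwards [ih, scale.eventually hb] with x hx hx'
      rw [pow_succ', mul_assoc, mul_inv_cancel_left₀ hb₀.ne'] at hx'
      rw [pow_succ', pow_succ', mul_assoc, mul_assoc]
      linarith
  obtain ⟨n, hn⟩ := pow_unbounded_of_one_lt s ((one_lt_inv₀ hb₀).2 hb₁)
  refine ⟨(1 / 2) ^ n, by positivity, ?_⟩
  filter_upwards [iterate n, eventually_ge_atTop 0] with x hx hx₀
  exact hx.trans (hanti (by gcongr))

lemma isBoundedUnder_ge_ratio (hpos : ∀ x, 0 < g x) (v : ℝ) :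
    IsBoundedUnder (· ≥ ·) atTop (fun x => g (v * x) / g x) :=
  isBoundedUnder_of ⟨0, fun x => (div_pos (hpos _) (hpos x)).le⟩

lemma eventually_scale_le (hanti : Antitone g) {v w : ℝ} (hvw : v ≤ w) :
    ∀ᶠ x in atTop, g (w * x) ≤ g (v * x) := by
  filter_upwards [eventually_ge_atTop 0] with x hx
  exact hanti (mul_le_mul_of_nonneg_right hvw hx)

lemma isBoundedUnder_le_ratio (hpos : ∀ x, 0 < g x) (hanti : Antitone g) {v : ℝ} (hv : 1 ≤ v) :
    IsBoundedUnder (· ≤ ·) atTop (fun x => g (v * x) / g x) := by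
  refine isBoundedUnder_of_eventually_le (a := 1) ?_
  filter_upwards [eventually_scale_le hanti hv] with x hx
  rw [one_mul] at hx
  exact (div_le_one (hpos x)).2 hx

lemma eventually_of_lt_lowerRatio (hpos : ∀ x, 0 < g x) {a v : ℝ} (ha : a < lowerRatio g v) :
    ∀ᶠ x in atTop, a * g x ≤ g (v * x) := by
  filter_upwards [eventually_lt_of_lt_liminf ha (isBoundedUnder_ge_ratio hpos v)] with x hx
  exact ((lt_div_iff₀ (hpos x)).1 hx).le

lemma le_lowerRatio (hpos : ∀ x, 0 < g x) (hanti : Antitone g) {a v : ℝ} (hv : 1 ≤ v)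
    (ha : ∀ᶠ x in atTop, a * g x ≤ g (v * x)) : a ≤ lowerRatio g v := by
  refine le_liminf_of_le (isBoundedUnder_le_ratio hpos hanti hv).isCoboundedUnder_ge ?_
  filter_upwards [ha] with x hx
  exact (le_div_iff₀ (hpos x)).2 hx

lemma eventually_of_upperRatio_lt (hpos : ∀ x, 0 < g x) (hanti : Antitone g) {a v : ℝ}
    (hv : 1 ≤ v) (ha : upperRatio g v < a) : ∀ᶠ x in atTop, g (v * x) ≤ a * g x := by
  filter_upwards [eventually_lt_of_limsup_lt ha (isBoundedUnder_le_ratio hpos hanti hv)] with x hx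
  exact ((div_lt_iff₀ (hpos x)).1 hx).le

lemma upperRatio_le (hpos : ∀ x, 0 < g x) {a v : ℝ} (ha : ∀ᶠ x in atTop, g (v * x) ≤ a * g x) :
    upperRatio g v ≤ a := by
  refine limsup_le_of_le (isBoundedUnder_ge_ratio hpos v).isCoboundedUnder_le ?_
  filter_upwards [ha] with x hx
  exact (div_le_iff₀ (hpos x)).2 hx

lemma lowerRatio_le_upperRatio (hpos : ∀ x, 0 < g x) (hanti : Antitone g) {v : ℝ} (hv : 1 ≤ v) :
    lowerRatio g v ≤ upperRatio g v :=
  liminf_le_limsup (isBoundedUnder_le_ratio hpos hanti hv) (isBoundedUnder_ge_ratio hpos v)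

lemma DominatedVariation.lowerRatio_pos (hD : DominatedVariation g) (hpos : ∀ x, 0 < g x)
    (hanti : Antitone g) {v : ℝ} (hv : 1 ≤ v) : 0 < lowerRatio g v :=
  let ⟨_, hc, hcv⟩ := hD v
  hc.trans_le (le_lowerRatio hpos hanti hv hcv)

lemma DominatedVariation.upperRatio_pos (hD : DominatedVariation g) (hpos : ∀ x, 0 < g x)
    (hanti : Antitone g) {v : ℝ} (hv : 1 ≤ v) : 0 < upperRatio g v :=
  (hD.lowerRatio_pos hpos hanti hv).trans_le (lowerRatio_le_upperRatio hpos hanti hv)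

lemma upperRatio_one_le (hpos : ∀ x, 0 < g x) : upperRatio g 1 ≤ 1 :=
  upperRatio_le hpos (.of_forall fun x => by rw [one_mul, one_mul])

lemma antitoneOn_lowerRatio (hpos : ∀ x, 0 < g x) (hanti : Antitone g) :
    AntitoneOn (lowerRatio g) (Ici 1) := by
  intro v hv w _ hvw
  refine le_of_forall_lt_imp_le_of_dense fun a ha => le_lowerRatio hpos hanti hv ?_
  filter_upwards [eventually_of_lt_lowerRatio hpos ha, eventually_scale_le hanti hvw] with x hx hx'
  exact hx.trans hx'

lemma antitoneOn_upperRatio (hpos : ∀ x, 0 < g x) (hanti : Antitone g) :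
    AntitoneOn (upperRatio g) (Ici 1) := by
  intro v hv w _ hvw
  refine le_of_forall_gt_imp_ge_of_dense fun a ha => upperRatio_le hpos ?_
  filter_upwards [eventually_of_upperRatio_lt hpos hanti hv ha, eventually_scale_le hanti hvw]
    with x hx hx'
  exact hx'.trans hx

lemma lowerRatio_nonneg (hpos : ∀ x, 0 < g x) (hanti : Antitone g) {v : ℝ} (hv : 1 ≤ v) :
    0 ≤ lowerRatio g v :=
  le_lowerRatio hpos hanti hv (.of_forall fun x => by rw [zero_mul]; exact (hpos _).le)

lemma lowerRatio_mul_le (hpos : ∀ x, 0 < g x) (hanti : Antitone g) {v w : ℝ} (hv : 1 ≤ v)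
    (hw : 1 ≤ w) : lowerRatio g v * lowerRatio g w ≤ lowerRatio g (v * w) := by
  have hvw : 1 ≤ v * w := one_le_mul_of_one_le_of_one_le hv hw
  have scale : Tendsto (fun x : ℝ => w * x) atTop atTop :=
    tendsto_id.const_mul_atTop (by positivity)
  refine mul_le_of_forall_lt_of_nonneg (lowerRatio_nonneg hpos hanti hv)
    (lowerRatio_nonneg hpos hanti hvw) fun a ha₀ ha b _ hb => le_lowerRatio hpos hanti hvw ?_
  filter_upwards [scale.eventually (eventually_of_lt_lowerRatio hpos ha),
    eventually_of_lt_lowerRatio hpos hb] with x hxa hxb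
  calc a * b * g x = a * (b * g x) := mul_assoc ..
    _ ≤ a * g (w * x) := by gcongr
    _ ≤ g (v * w * x) := by rwa [mul_assoc]

lemma upperRatio_mul_le (hpos : ∀ x, 0 < g x) (hanti : Antitone g) {v w : ℝ} (hv : 1 ≤ v)
    (hw : 1 ≤ w) : upperRatio g (v * w) ≤ upperRatio g v * upperRatio g w := by
  have scale : Tendsto (fun x : ℝ => w * x) atTop atTop :=
    tendsto_id.const_mul_atTop (by positivity)
  refine le_mul_of_forall_lt₀ fun a ha b hb => upperRatio_le hpos ?_
  have ha₀ : 0 < a := ((lowerRatio_nonneg hpos hanti hv).trans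
    (lowerRatio_le_upperRatio hpos hanti hv)).trans_lt ha
  filter_upwards [scale.eventually (eventually_of_upperRatio_lt hpos hanti hv ha),
    eventually_of_upperRatio_lt hpos hanti hw hb] with x hxa hxb
  calc g (v * w * x) ≤ a * g (w * x) := by rwa [mul_assoc]
    _ ≤ a * (b * g x) := by gcongr
    _ = a * b * g x := (mul_assoc ..).symm

end Tail

section Index

variable {f : ℝ → ℝ}

lemma tendsto_div_atTop_of_natCast {ψ : ℝ → ℝ} (hmono : MonotoneOn ψ (Ici 0))
    (hψ : ∀ s, 0 ≤ s → 0 ≤ ψ s) {ℓ : ℝ}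
    (h : Tendsto (fun n : ℕ => ψ n / n) atTop (𝓝 ℓ)) :
    Tendsto (fun s => ψ s / s) atTop (𝓝 ℓ) := by
  have lower : Tendsto (fun n : ℕ => ψ n / n * (n / (n + 1))) atTop (𝓝 ℓ) := by
    simpa using h.mul (tendsto_natCast_div_add_atTop (1 : ℝ))
  have upper : Tendsto (fun n : ℕ => ψ (n + 1) / (n + 1) * (n / (n + 1) : ℝ)⁻¹) atTop (𝓝 ℓ) := by
    simpa using (h.comp (tendsto_add_atTop_nat 1)).mul
      ((tendsto_natCast_div_add_atTop (1 : ℝ)).inv₀ one_ne_zero)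
  refine tendsto_of_tendsto_of_tendsto_of_le_of_le' (lower.comp tendsto_nat_floor_atTop)
    (upper.comp tendsto_nat_floor_atTop) ?_ ?_
  all_goals
    filter_upwards [eventually_ge_atTop (1 : ℝ)] with s hs
    have hs₀ : 0 ≤ s := by linarith
    have floor_pos : (0 : ℝ) < ⌊s⌋₊ := mod_cast Nat.floor_pos.2 hs
    have floor_le : (⌊s⌋₊ : ℝ) ≤ s := Nat.floor_le hs₀
    have lt_floor : s < ⌊s⌋₊ + 1 := Nat.lt_floor_add_one s
  · have hψ₀ := hψ s hs₀
    calc ψ ⌊s⌋₊ / ⌊s⌋₊ * (⌊s⌋₊ / (⌊s⌋₊ + 1)) = ψ ⌊s⌋₊ / (⌊s⌋₊ + 1) :=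
          div_mul_div_cancel₀ floor_pos.ne'
      _ ≤ ψ s / s := by
          gcongr
          exact hmono floor_pos.le hs₀ floor_le
  · have hψ₀ := hψ (⌊s⌋₊ + 1) (by positivity)
    calc ψ s / s ≤ ψ (⌊s⌋₊ + 1) / ⌊s⌋₊ := by
          gcongr
          exact hmono hs₀ (hs₀.trans lt_floor.le) lt_floor.le
      _ = ψ (⌊s⌋₊ + 1) / (⌊s⌋₊ + 1) * (⌊s⌋₊ / (⌊s⌋₊ + 1) : ℝ)⁻¹ := by field_simp

lemma tendsto_log_div_log_of_natCast (hpos : ∀ v, 1 ≤ v → 0 < f v) (hone : f 1 ≤ 1)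
    (hanti : AntitoneOn f (Ici 1)) {ℓ : ℝ}
    (h : Tendsto (fun n : ℕ => Real.log (f (Real.exp n)) / n) atTop (𝓝 ℓ)) :
    Tendsto (fun v => Real.log (f v) / Real.log v) atTop (𝓝 ℓ) := by
  have one_le : ∀ {s : ℝ}, 0 ≤ s → 1 ≤ Real.exp s := Real.one_le_exp
  have mono : MonotoneOn (fun s => -Real.log (f (Real.exp s))) (Ici 0) :=
    fun s hs t ht hst => neg_le_neg (Real.log_le_log (hpos _ (one_le ht))
      (hanti (one_le hs) (one_le ht) (Real.exp_le_exp.2 hst)))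
  have nonneg : ∀ s : ℝ, 0 ≤ s → 0 ≤ -Real.log (f (Real.exp s)) := fun s hs =>
    neg_nonneg.2 (Real.log_nonpos (hpos _ (one_le hs)).le
      ((hanti self_mem_Ici (one_le hs) (one_le hs)).trans hone))
  have neg_h : Tendsto (fun n : ℕ => -Real.log (f (Real.exp n)) / n) atTop (𝓝 (-ℓ)) := by
    simpa only [neg_div] using h.neg
  have limit := ((tendsto_div_atTop_of_natCast mono nonneg neg_h).comp Real.tendsto_log_atTop).neg
  rw [neg_neg] at limit
  refine limit.congr' ?_
  filter_upwards [eventually_gt_atTop 0] with v hv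
  rw [Function.comp_apply, Real.exp_log hv, neg_div, neg_neg]

lemma exists_tendsto_log_div_log_of_mul_le (hpos : ∀ v, 1 ≤ v → 0 < f v) (hone : f 1 ≤ 1)
    (hanti : AntitoneOn f (Ici 1))
    (hmul : ∀ v w, 1 ≤ v → 1 ≤ w → f v * f w ≤ f (v * w)) :
    ∃ ℓ, Tendsto (fun v => Real.log (f v) / Real.log v) atTop (𝓝 ℓ) := by
  have one_le : ∀ n : ℕ, 1 ≤ Real.exp n := fun n => Real.one_le_exp n.cast_nonneg
  have subadditive : Subadditive fun n : ℕ => -Real.log (f (Real.exp n)) := by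
    intro m n
    have hm := hpos _ (one_le m)
    have hn := hpos _ (one_le n)
    beta_reduce
    rw [Nat.cast_add, Real.exp_add, ← neg_add, ← Real.log_mul hm.ne' hn.ne']
    exact neg_le_neg (Real.log_le_log (mul_pos hm hn) (hmul _ _ (one_le m) (one_le n)))
  have bddBelow : BddBelow (range fun n : ℕ => -Real.log (f (Real.exp n)) / n) := by
    refine ⟨0, forall_mem_range.2 fun n => div_nonneg (neg_nonneg.2 ?_) n.cast_nonneg⟩
    exact Real.log_nonpos (hpos _ (one_le n)).le
      ((hanti self_mem_Ici (one_le n) (one_le n)).trans hone)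
  refine ⟨-subadditive.lim, tendsto_log_div_log_of_natCast hpos hone hanti ?_⟩
  simpa only [neg_div, neg_neg] using (subadditive.tendsto_lim bddBelow).neg

lemma exists_tendsto_log_div_log_of_le_mul (hpos : ∀ v, 1 ≤ v → 0 < f v) (hone : f 1 ≤ 1)
    (hanti : AntitoneOn f (Ici 1))
    (hmul : ∀ v w, 1 ≤ v → 1 ≤ w → f (v * w) ≤ f v * f w)
    (hbdd : BddBelow (range fun n : ℕ => Real.log (f (Real.exp n)) / n)) :
    ∃ ℓ, Tendsto (fun v => Real.log (f v) / Real.log v) atTop (𝓝 ℓ) := by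
  have one_le : ∀ n : ℕ, 1 ≤ Real.exp n := fun n => Real.one_le_exp n.cast_nonneg
  have subadditive : Subadditive fun n : ℕ => Real.log (f (Real.exp n)) := by
    intro m n
    have hm := hpos _ (one_le m)
    have hn := hpos _ (one_le n)
    beta_reduce
    rw [Nat.cast_add, Real.exp_add, ← Real.log_mul hm.ne' hn.ne']
    exact Real.log_le_log (hpos _ (one_le_mul_of_one_le_of_one_le (one_le m) (one_le n)))
      (hmul _ _ (one_le m) (one_le n))
  exact ⟨_, tendsto_log_div_log_of_natCast hpos hone hanti (subadditive.tendsto_lim hbdd)⟩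

end Index

section Potter

variable {g : ℝ → ℝ}

lemma DominatedVariation.tendsto_Jplus (hD : DominatedVariation g) (hpos : ∀ x, 0 < g x)
    (hanti : Antitone g) :
    Tendsto (fun v => Real.log (lowerRatio g v) / Real.log v) atTop (𝓝 (-Jplus g)) := by
  obtain ⟨ℓ, hℓ⟩ := exists_tendsto_log_div_log_of_mul_le
    (fun _ => hD.lowerRatio_pos hpos hanti)
    ((lowerRatio_le_upperRatio hpos hanti le_rfl).trans (upperRatio_one_le hpos))
    (antitoneOn_lowerRatio hpos hanti) (fun _ _ => lowerRatio_mul_le hpos hanti)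
  rwa [show -Jplus g = ℓ from (neg_neg _).trans hℓ.limUnder_eq]

lemma DominatedVariation.tendsto_Jminus (hD : DominatedVariation g) (hpos : ∀ x, 0 < g x)
    (hanti : Antitone g) :
    Tendsto (fun v => Real.log (upperRatio g v) / Real.log v) atTop (𝓝 (-Jminus g)) := by
  have one_le : ∀ n : ℕ, 1 ≤ Real.exp n := fun n => Real.one_le_exp n.cast_nonneg
  have exp_atTop : Tendsto (fun n : ℕ => Real.exp n) atTop atTop :=
    Real.tendsto_exp_atTop.comp tendsto_natCast_atTop_atTop
  have lower_bdd : BddBelow (range fun n : ℕ => Real.log (lowerRatio g (Real.exp n)) / n) := by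
    simpa only [Function.comp_def, Real.log_exp] using
      ((hD.tendsto_Jplus hpos hanti).comp exp_atTop).bddBelow_range
  have bdd : BddBelow (range fun n : ℕ => Real.log (upperRatio g (Real.exp n)) / n) :=
    lower_bdd.range_mono _ fun n => div_le_div_of_nonneg_right
      (Real.log_le_log (hD.lowerRatio_pos hpos hanti (one_le n))
        (lowerRatio_le_upperRatio hpos hanti (one_le n))) n.cast_nonneg
  obtain ⟨ℓ, hℓ⟩ := exists_tendsto_log_div_log_of_le_mul
    (fun _ => hD.upperRatio_pos hpos hanti) (upperRatio_one_le hpos)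
    (antitoneOn_upperRatio hpos hanti) (fun _ _ => upperRatio_mul_le hpos hanti) bdd
  rwa [show -Jminus g = ℓ from (neg_neg _).trans hℓ.limUnder_eq]

lemma DominatedVariation.exists_le_scale_of_Jplus_lt (hD : DominatedVariation g)
    (hpos : ∀ x, 0 < g x) (hanti : Antitone g) {p : ℝ} (hp : Jplus g < p) :
    ∃ v > 1, ∀ᶠ x in atTop, v ^ (-p) * g x ≤ g (v * x) := by
  obtain ⟨v, hv, hv₁⟩ := (((hD.tendsto_Jplus hpos hanti).eventually
    (lt_mem_nhds (neg_lt_neg hp))).and (eventually_gt_atTop 1)).exists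
  refine ⟨v, hv₁, eventually_of_lt_lowerRatio hpos ?_⟩
  rw [lt_div_iff₀ (Real.log_pos hv₁)] at hv
  rwa [← Real.log_lt_log_iff (by positivity) (hD.lowerRatio_pos hpos hanti hv₁.le),
    Real.log_rpow (by positivity)]

lemma DominatedVariation.exists_scale_le_of_lt_Jminus (hD : DominatedVariation g)
    (hpos : ∀ x, 0 < g x) (hanti : Antitone g) {q : ℝ} (hq : q < Jminus g) :
    ∃ v > 1, ∀ᶠ x in atTop, g (v * x) ≤ v ^ (-q) * g x := by
  obtain ⟨v, hv, hv₁⟩ := (((hD.tendsto_Jminus hpos hanti).eventually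
    (gt_mem_nhds (neg_lt_neg hq))).and (eventually_gt_atTop 1)).exists
  refine ⟨v, hv₁, eventually_of_upperRatio_lt hpos hanti hv₁.le ?_⟩
  rw [div_lt_iff₀ (Real.log_pos hv₁)] at hv
  rwa [← Real.log_lt_log_iff (hD.upperRatio_pos hpos hanti hv₁.le) (by positivity),
    Real.log_rpow (by positivity)]

lemma exists_forall_ge_of_eventually {Q : ℝ → Prop} (h : ∀ᶠ x in atTop, Q x) :
    ∃ x₀ > 0, ∀ x, x₀ ≤ x → Q x := by
  obtain ⟨x₀, hx₀⟩ := eventually_atTop.1 (h.and (eventually_gt_atTop 0))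
  exact ⟨x₀, (hx₀ x₀ le_rfl).2, fun x hx => (hx₀ x hx).1⟩

lemma DominatedVariation.potter_bound (hD : DominatedVariation g) (hpos : ∀ x, 0 < g x)
    (hanti : Antitone g) {q : ℝ} (hq₀ : 0 ≤ q) (hq : q < Jminus g) :
    ∃ C > 0, ∃ x₀ > 0, ∀ x, x₀ ≤ x → ∀ s, 1 ≤ s → g (s * x) ≤ C * s ^ (-q) * g x := by
  obtain ⟨v, hv, hgv⟩ := hD.exists_scale_le_of_lt_Jminus hpos hanti hq
  obtain ⟨x₀, hx₀, hgv⟩ := exists_forall_ge_of_eventually hgv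
  have hv₀ : 0 < v := by linarith
  refine ⟨v ^ q, by positivity, x₀, hx₀, fun x hx s hs => ?_⟩
  have hx_pos : 0 < x := hx₀.trans_le hx
  refine forall_ge_of_scaling (Q := fun s => g (s * x) ≤ v ^ q * s ^ (-q) * g x) one_pos hv
    (fun s hs => ?base) (fun s hs ih => ?step) s hs
  case base =>
    rw [mul_one] at hs
    have hs₀ : 0 < s := one_pos.trans_le hs.1
    calc g (s * x) ≤ 1 * g x := by rw [one_mul]; exact hanti (le_mul_of_one_le_left hx_pos.le hs.1)
      _ ≤ v ^ q * s ^ (-q) * g x := by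
        gcongr
        · exact (hpos x).le
        rw [Real.rpow_neg hs₀.le, ← div_eq_mul_inv, one_le_div (by positivity)]
        exact Real.rpow_le_rpow hs₀.le hs.2 hq₀
  case step =>
    calc g (v * s * x) ≤ v ^ (-q) * g (s * x) := by
          rw [mul_assoc]; exact hgv _ (hx.trans (le_mul_of_one_le_left hx_pos.le hs))
      _ ≤ v ^ (-q) * (v ^ q * s ^ (-q) * g x) := by gcongr
      _ = v ^ q * (v * s) ^ (-q) * g x := by rw [Real.mul_rpow hv₀.le (by linarith)]; ring

lemma DominatedVariation.exists_one_le_mul_rpow_mul (hD : DominatedVariation g)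
    (hpos : ∀ x, 0 < g x) (hanti : Antitone g) {p : ℝ} (hp₀ : 0 ≤ p) (hp : Jplus g < p) :
    ∃ C > 0, ∀ᶠ x in atTop, 1 ≤ C * x ^ p * g x := by
  obtain ⟨v, hv, hgv⟩ := hD.exists_le_scale_of_Jplus_lt hpos hanti hp
  obtain ⟨x₀, hx₀, hgv⟩ := exists_forall_ge_of_eventually hgv
  have hv₀ : 0 < v := by linarith
  have hg₀ := hpos (v * x₀)
  refine ⟨(x₀ ^ p * g (v * x₀))⁻¹, by positivity, ?_⟩
  refine (eventually_ge_atTop x₀).mono (forall_ge_of_scaling hx₀ hv (fun y hy => ?base)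
    fun y hy ih => ?step)
  case base =>
    have hy₀ : 0 < y := hx₀.trans_le hy.1
    rw [mul_assoc, le_inv_mul_iff₀ (by positivity), mul_one]
    gcongr
    exacts [hy.1, hanti hy.2]
  case step =>
    have hy₀ : 0 < y := hx₀.trans_le hy
    calc 1 ≤ (x₀ ^ p * g (v * x₀))⁻¹ * y ^ p * g y := ih
      _ = (x₀ ^ p * g (v * x₀))⁻¹ * (v * y) ^ p * (v ^ (-p) * g y) := by
          rw [Real.mul_rpow hv₀.le hy₀.le, Real.rpow_neg hv₀.le]; field_simp
      _ ≤ (x₀ ^ p * g (v * x₀))⁻¹ * (v * y) ^ p * g (v * y) := by gcongr; exact hgv y hy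

/-- Karamata's argument: `y ^ p * g y` itself grows geometrically in steps of `v`, so the last
increment of `T` dominates. -/
lemma DominatedVariation.exists_le_mul_rpow_mul (hD : DominatedVariation g)
    (hpos : ∀ x, 0 < g x) (hanti : Antitone g) {p : ℝ} (hp : Jplus g < p)
    {T : ℝ → ℝ} (hT : ∀ y, 0 < y → T y ≤ y ^ p)
    (hTv : ∀ v y, 1 ≤ v → 0 < y → T (v * y) ≤ T y + (v * y) ^ p * g y) :
    ∃ C > 0, ∀ᶠ y in atTop, T y ≤ C * y ^ p * g y := by
  obtain ⟨p', hp', hp'p⟩ := exists_between hp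
  obtain ⟨v, hv, hgv⟩ := hD.exists_le_scale_of_Jplus_lt hpos hanti hp'
  obtain ⟨x₀, hx₀, hgv⟩ := exists_forall_ge_of_eventually hgv
  have hv₀ : 0 < v := by linarith
  have hg₀ := hpos (v * x₀)
  have gain : 0 < v ^ p * v ^ (-p') - 1 := by
    rw [← Real.rpow_add hv₀, sub_pos]
    exact Real.one_lt_rpow hv (by linarith)
  set C := max (g (v * x₀))⁻¹ (v ^ p / (v ^ p * v ^ (-p') - 1))
  have hC₀ : 0 < C := lt_max_of_lt_left (inv_pos.2 hg₀)
  have hC : C + v ^ p ≤ C * (v ^ p * v ^ (-p')) := by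
    have := (div_le_iff₀ gain).1 (le_max_right (g (v * x₀))⁻¹ (v ^ p / (v ^ p * v ^ (-p') - 1)))
    linarith
  refine ⟨C, hC₀, (eventually_ge_atTop x₀).mono (forall_ge_of_scaling hx₀ hv (fun y hy => ?base)
    fun y hy ih => ?step)⟩
  case base =>
    have hy₀ : 0 < y := hx₀.trans_le hy.1
    calc T y ≤ y ^ p * ((g (v * x₀))⁻¹ * g (v * x₀)) := by
          rw [inv_mul_cancel₀ hg₀.ne', mul_one]; exact hT y hy₀
      _ ≤ y ^ p * (C * g y) := by gcongr; exacts [le_max_left _ _, hanti hy.2]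
      _ = C * y ^ p * g y := by ring
  case step =>
    have hy₀ : 0 < y := hx₀.trans_le hy
    have hgy := hpos y
    calc T (v * y) ≤ C * y ^ p * g y + (v * y) ^ p * g y :=
          (hTv v y hv.le hy₀).trans (by gcongr)
      _ = (C + v ^ p) * (y ^ p * g y) := by rw [Real.mul_rpow hv₀.le hy₀.le]; ring
      _ ≤ C * (v ^ p * v ^ (-p')) * (y ^ p * g y) := by gcongr
      _ = C * (v * y) ^ p * (v ^ (-p') * g y) := by rw [Real.mul_rpow hv₀.le hy₀.le]; ring
      _ ≤ C * (v * y) ^ p * g (v * y) := by gcongr; exact hgv y hy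

end Potter

/-! ### Suprema of processes with Gaussian-type increments -/

section Chaining

variable {f : ℝ → ℝ} {T y : ℝ}

/-- The tolerances `y / 10 * (9 / 10) ^ m` of the increments at dyadic level `m` sum up to `y`. -/
lemma abs_le_on_dyadic_grid (hf₀ : f 0 = 0) (hy : 0 < y)
    (h : ∀ m k : ℕ, k < 2 ^ m →
      |f (T * (k + 1) / 2 ^ m) - f (T * k / 2 ^ m)| ≤ y / 10 * (9 / 10) ^ m) (m : ℕ) :
    ∀ k : ℕ, k ≤ 2 ^ m → |f (T * k / 2 ^ m)| ≤ y * (1 - (9 / 10) ^ (m + 1)) := by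
  induction m with
  | zero =>
    intro k hk
    rw [pow_zero] at hk
    interval_cases k
    · simp only [Nat.cast_zero, mul_zero, zero_div, hf₀, abs_zero]
      linarith
    · have := h 0 0 one_pos
      simp only [Nat.cast_zero, Nat.cast_one, mul_zero, zero_add, mul_one, pow_zero, div_one, hf₀,
        sub_zero, pow_one] at this ⊢
      linarith
  | succ m ih =>
    intro k hk
    have even_point : ∀ j : ℕ, T * ((2 * j : ℕ) : ℝ) / 2 ^ (m + 1) = T * j / 2 ^ m := by
      intro j; push_cast; field_simp; ring
    have budget : y * (1 - (9 / 10 : ℝ) ^ (m + 1 + 1)) =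
        y * (1 - (9 / 10) ^ (m + 1)) + y / 10 * (9 / 10) ^ (m + 1) := by ring
    rw [budget]
    rcases Nat.even_or_odd' k with ⟨j, rfl | rfl⟩
    · rw [even_point]
      refine (ih j (by omega)).trans (le_add_of_nonneg_right (by positivity))
    · have step := h (m + 1) (2 * j) (by omega)
      rw [even_point] at step
      rw [Nat.cast_add, Nat.cast_one]
      linarith [ih j (by omega), abs_sub_abs_le_abs_sub
        (f (T * (((2 * j : ℕ) : ℝ) + 1) / 2 ^ (m + 1))) (f (T * j / 2 ^ m))]

lemma abs_le_of_dyadic_increments (hf : Continuous f) (hf₀ : f 0 = 0) (hT : 0 < T) (hy : 0 < y)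
    (h : ∀ m k : ℕ, k < 2 ^ m →
      |f (T * (k + 1) / 2 ^ m) - f (T * k / 2 ^ m)| ≤ y / 10 * (9 / 10) ^ m) :
    ∀ t ∈ Icc 0 T, |f t| ≤ y := by
  rintro t ⟨ht₀, htT⟩
  have approx : Tendsto (fun m : ℕ => T * (⌊t / T * 2 ^ m⌋₊ / 2 ^ m : ℝ)) atTop (𝓝 t) := by
    have := ((tendsto_nat_floor_mul_div_atTop (div_nonneg ht₀ hT.le)).comp
      (tendsto_pow_atTop_atTop_of_one_lt one_lt_two)).const_mul T
    rwa [mul_div_cancel₀ _ hT.ne'] at this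
  refine le_of_tendsto ((hf.tendsto t).comp approx).abs (.of_forall fun m => ?_)
  have index_le : ⌊t / T * 2 ^ m⌋₊ ≤ 2 ^ m := by
    refine Nat.floor_le_of_le ?_
    push_cast
    exact mul_le_of_le_one_left (by positivity) ((div_le_one hT).2 htT)
  rw [Function.comp_apply, ← mul_div_assoc]
  refine (abs_le_on_dyadic_grid hf₀ hy h m _ index_le).trans (mul_le_of_le_one_right hy.le ?_)
  exact sub_le_self _ (by positivity)

lemma exists_dyadic_increment_of_lt {Ω : Type*} {W : ℝ → Ω → ℝ} (hW₀ : ∀ ω, W 0 ω = 0)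
    (hT : 0 < T) (hy : 0 < y) :
    {ω | ∃ t ∈ Icc 0 T, y < |W t ω|} ⊆ {ω | ¬ Continuous fun t => W t ω} ∪
      ⋃ m : ℕ, ⋃ k ∈ Finset.range (2 ^ m), {ω | y / 10 * (9 / 10) ^ m <
        |W (T * (k + 1) / 2 ^ m) ω - W (T * k / 2 ^ m) ω|} := by
  rintro ω ⟨t, ht, hlt⟩
  by_contra hω
  simp only [mem_union, mem_iUnion, mem_ofPred_eq, Finset.mem_range, not_or, not_exists, not_not,
    not_lt] at hω
  exact hlt.not_ge (abs_le_of_dyadic_increments hω.1 (hW₀ ω) hT hy hω.2 t ht)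

end Chaining

lemma two_pow_mul_dyadic_tail (C T y : ℝ) (b m : ℕ) :
    2 ^ m * (C * (T / 2 ^ m) ^ b / (y / 10 * (9 / 10) ^ m) ^ (2 * b)) =
      C * 10 ^ (2 * b) * T ^ b / y ^ (2 * b) * (2 * (100 / 162) ^ b) ^ m := by
  have h9 : ((9 / 10 : ℝ) ^ m) ^ (2 * b) = ((81 / 100) ^ b) ^ m := by
    rw [show (81 / 100 : ℝ) = (9 / 10) ^ 2 by norm_num, ← pow_mul, ← pow_mul, ← pow_mul]
    congr 1
    ring
  have h100 : (100 / 162 : ℝ) ^ b = (2 ^ b * (81 / 100) ^ b)⁻¹ := by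
    rw [← mul_pow, ← inv_pow]
    norm_num
  rw [mul_pow (y / 10), div_pow T, div_pow y, h9, h100, mul_pow, inv_pow, mul_pow ((2 : ℝ) ^ b),
    pow_right_comm]
  field_simp

lemma gaussianReal_abs_tail_le {b : ℕ} (hb : b ≠ 0) :
    ∃ C : ℝ, 0 ≤ C ∧ ∀ t : ℝ, 0 < t → ∀ y : ℝ, 0 < y →
      gaussianReal 0 t.toNNReal {z | y < |z|} ≤ ENNReal.ofReal (C * t ^ b / y ^ (2 * b)) := by
  set γ := gaussianReal 0 1
  have integrable : Integrable (fun z : ℝ => |z| ^ (2 * b)) γ :=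
    (memLp_id_gaussianReal (μ := 0) (v := 1) (2 * b : ℕ)).integrable_norm_pow (by simpa using hb)
  refine ⟨∫ z, |z| ^ (2 * b) ∂γ, integral_nonneg fun z => by positivity, fun t ht y hy => ?_⟩
  have scaling : gaussianReal 0 t.toNNReal = γ.map (√t * ·) := by
    rw [gaussianReal_map_const_mul, mul_zero, mul_one]
    congr 1
    ext
    simp [Real.sq_sqrt ht.le, ht.le]
  rw [scaling, Measure.map_apply (by fun_prop) (measurableSet_lt measurable_const (by fun_prop)),
    ← ofReal_measureReal]
  apply ENNReal.ofReal_le_ofReal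
  have subset : (√t * ·) ⁻¹' {z | y < |z|} ⊆ {z | y ^ (2 * b) / t ^ b ≤ |z| ^ (2 * b)} := by
    intro z (hz : y < |√t * z|)
    have : |√t * z| ^ (2 * b) = |z| ^ (2 * b) * t ^ b := by
      rw [abs_mul, mul_pow, abs_of_nonneg (Real.sqrt_nonneg t), pow_mul √t, Real.sq_sqrt ht.le,
        mul_comm]
    rw [mem_ofPred_eq, div_le_iff₀ (by positivity), ← this]
    gcongr
  have markov := mul_meas_ge_le_integral_of_nonneg (.of_forall fun z : ℝ => by positivity)
    integrable (y ^ (2 * b) / t ^ b)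
  calc γ.real ((√t * ·) ⁻¹' {z | y < |z|})
      ≤ γ.real {z | y ^ (2 * b) / t ^ b ≤ |z| ^ (2 * b)} := measureReal_mono subset
    _ ≤ (∫ z, |z| ^ (2 * b) ∂γ) / (y ^ (2 * b) / t ^ b) := by
        rwa [le_div_iff₀' (by positivity)]
    _ = (∫ z, |z| ^ (2 * b) ∂γ) * t ^ b / y ^ (2 * b) := div_div_eq_mul_div ..

/-- The increments of the process `W` obey the tail bound that Markov's inequality yields when
their moments of order `2 b` are at most `C (t - s) ^ b`, as for Brownian motion. -/
def IncrementTailBound {Ω : Type*} [MeasurableSpace Ω] (P : Measure Ω) (W : ℝ → Ω → ℝ) (C : ℝ)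
    (b : ℕ) : Prop :=
  ∀ s t y : ℝ, 0 ≤ s → s < t → 0 < y →
    P {ω | y < |W t ω - W s ω|} ≤ ENNReal.ofReal (C * (t - s) ^ b / y ^ (2 * b))

section Supremum

variable {Ω : Type*} [MeasurableSpace Ω] {P : Measure Ω} {W : ℝ → Ω → ℝ} {C : ℝ} {b : ℕ}

lemma exists_incrementTailBound_of_gaussian (hW : ∀ t, Measurable (W t))
    (hgauss : ∀ s t : ℝ, 0 ≤ s → s < t →
      P.map (fun ω => W t ω - W s ω) = gaussianReal 0 (t - s).toNNReal) (hb : b ≠ 0) :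
    ∃ C, 0 ≤ C ∧ IncrementTailBound P W C b := by
  obtain ⟨C, hC, tail⟩ := gaussianReal_abs_tail_le hb
  refine ⟨C, hC, fun s t y hs hst hy => ?_⟩
  have increment_meas : Measurable fun ω => W t ω - W s ω := (hW t).sub (hW s)
  have := tail (t - s) (sub_pos.2 hst) y hy
  rwa [← hgauss s t hs hst, Measure.map_apply increment_meas
    (measurableSet_lt measurable_const (by fun_prop))] at this

/-- The hypothesis `2 ≤ b` makes the union bound over the `2 ^ m` increments at level `m`
summable in `m`. -/
lemma IncrementTailBound.sup_Icc (hinc : IncrementTailBound P W C b) (hC : 0 ≤ C)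
    (hW₀ : ∀ ω, W 0 ω = 0) (hcont : ∀ᵐ ω ∂P, Continuous fun t => W t ω) (hb : 2 ≤ b) :
    ∃ K, 0 ≤ K ∧ ∀ T y : ℝ, 0 < T → 0 < y →
      P {ω | ∃ t ∈ Icc 0 T, y < |W t ω|} ≤ ENNReal.ofReal (K * T ^ b / y ^ (2 * b)) := by
  set ρ : ℝ := 2 * (100 / 162) ^ b
  have hρ₁ : ρ < 1 := by
    have : (100 / 162 : ℝ) ^ b ≤ (100 / 162) ^ 2 :=
      pow_le_pow_of_le_one (by norm_num) (by norm_num) hb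
    norm_num [ρ] at this ⊢
    linarith
  have : 0 < 1 - ρ := sub_pos.2 hρ₁
  refine ⟨C * 10 ^ (2 * b) * (1 - ρ)⁻¹, by positivity, fun T y hT hy => ?_⟩
  have increment : ∀ m k : ℕ, P {ω | y / 10 * (9 / 10) ^ m <
      |W (T * (k + 1) / 2 ^ m) ω - W (T * k / 2 ^ m) ω|} ≤
        ENNReal.ofReal (C * (T / 2 ^ m) ^ b / (y / 10 * (9 / 10) ^ m) ^ (2 * b)) := by
    intro m k
    have := hinc (T * k / 2 ^ m) (T * (k + 1) / 2 ^ m) (y / 10 * (9 / 10) ^ m) (by positivity)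
      (by gcongr; linarith) (by positivity)
    rwa [← sub_div, ← mul_sub, add_sub_cancel_left, mul_one] at this
  calc P {ω | ∃ t ∈ Icc 0 T, y < |W t ω|}
      ≤ P {ω | ¬ Continuous fun t => W t ω} + ∑' m : ℕ, ∑ k ∈ Finset.range (2 ^ m),
          P {ω | y / 10 * (9 / 10) ^ m < |W (T * (k + 1) / 2 ^ m) ω - W (T * k / 2 ^ m) ω|} := by
        refine (measure_mono (exists_dyadic_increment_of_lt hW₀ hT hy)).trans
          ((measure_union_le _ _).trans ?_)
        gcongr
        refine (measure_iUnion_le _).trans ?_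
        gcongr
        exact measure_biUnion_finset_le _ _
    _ ≤ 0 + ∑' m : ℕ, ENNReal.ofReal (C * 10 ^ (2 * b) * T ^ b / y ^ (2 * b) * ρ ^ m) := by
        rw [show P {ω | ¬ Continuous fun t => W t ω} = 0 from hcont]
        gcongr with m
        refine (Finset.sum_le_sum fun k _ => increment m k).trans_eq ?_
        rw [Finset.sum_const, Finset.card_range, nsmul_eq_mul, ← two_pow_mul_dyadic_tail C T y b m,
          ENNReal.ofReal_mul (pow_nonneg zero_le_two m), ENNReal.ofReal_pow zero_le_two m,
          ENNReal.ofReal_ofNat, Nat.cast_pow, Nat.cast_ofNat]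
    _ = ENNReal.ofReal (C * 10 ^ (2 * b) * (1 - ρ)⁻¹ * T ^ b / y ^ (2 * b)) := by
        rw [zero_add, ← ENNReal.ofReal_tsum_of_nonneg (fun m => by positivity)
          ((summable_geometric_of_lt_one (by positivity) hρ₁).mul_left _), tsum_mul_left,
          tsum_geometric_of_lt_one (by positivity) hρ₁]
        congr 1
        ring

lemma summable_add_one_pow_mul_geometric (b : ℕ) {ρ : ℝ} (hρ₀ : 0 < ρ) (hρ₁ : ρ < 1) :
    Summable fun n : ℕ => ((n : ℝ) + 1) ^ b * ρ ^ n := by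
  have summable : Summable fun n : ℕ => (n : ℝ) ^ b * ρ ^ n :=
    summable_pow_mul_geometric_of_norm_lt_one b (by rwa [Real.norm_of_nonneg hρ₀.le])
  refine (((summable_nat_add_iff 1).2 summable).mul_left ρ⁻¹).congr fun n => ?_
  rw [pow_succ' ρ]
  push_cast
  field_simp

lemma IncrementTailBound.sup_exp_weighted (hinc : IncrementTailBound P W C b) (hC : 0 ≤ C)
    (hW₀ : ∀ ω, W 0 ω = 0) (hcont : ∀ᵐ ω ∂P, Continuous fun t => W t ω) (hb : 2 ≤ b)
    {s : ℝ} (hs : 0 < s) :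
    ∃ K, 0 ≤ K ∧ ∀ y : ℝ, 0 < y →
      P {ω | ∃ t, 0 ≤ t ∧ y * Real.exp (s * t) < |W t ω|} ≤ ENNReal.ofReal (K / y ^ (2 * b)) := by
  obtain ⟨K, hK, sup_Icc⟩ := hinc.sup_Icc hC hW₀ hcont hb
  set ρ : ℝ := Real.exp (-(s * (2 * b)))
  have hρ₁ : ρ < 1 := by
    have : (0 : ℝ) < b := by exact_mod_cast (by omega : 0 < b)
    exact Real.exp_lt_one_iff.2 (neg_lt_zero.2 (by positivity))
  have summable := summable_add_one_pow_mul_geometric b (Real.exp_pos _) hρ₁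
  refine ⟨K * ∑' n : ℕ, ((n : ℝ) + 1) ^ b * ρ ^ n,
    mul_nonneg hK (tsum_nonneg fun n => by positivity), fun y hy => ?_⟩
  have subset : {ω | ∃ t, 0 ≤ t ∧ y * Real.exp (s * t) < |W t ω|} ⊆
      ⋃ n : ℕ, {ω | ∃ t ∈ Icc (0 : ℝ) (n + 1), y * Real.exp (s * n) < |W t ω|} := by
    rintro ω ⟨t, ht₀, ht⟩
    refine mem_iUnion.2 ⟨⌊t⌋₊, t, ⟨ht₀, (Nat.lt_floor_add_one t).le⟩, lt_of_le_of_lt ?_ ht⟩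
    have := Nat.floor_le ht₀
    gcongr
  have weight : ∀ n : ℕ, Real.exp (s * n) ^ (2 * b) = (ρ ^ n)⁻¹ := by
    intro n
    rw [← Real.exp_nat_mul, ← Real.exp_nat_mul, ← Real.exp_neg]
    push_cast
    ring_nf
  calc P {ω | ∃ t, 0 ≤ t ∧ y * Real.exp (s * t) < |W t ω|}
      ≤ ∑' n : ℕ, P {ω | ∃ t ∈ Icc (0 : ℝ) (n + 1), y * Real.exp (s * n) < |W t ω|} :=
        (measure_mono subset).trans (measure_iUnion_le _)
    _ ≤ ∑' n : ℕ, ENNReal.ofReal (K / y ^ (2 * b) * (((n : ℝ) + 1) ^ b * ρ ^ n)) := by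
        gcongr with n
        refine (sup_Icc (n + 1) (y * Real.exp (s * n)) (by positivity) (by positivity)).trans_eq ?_
        rw [mul_pow, weight]
        field_simp
    _ = ENNReal.ofReal (K * (∑' n : ℕ, ((n : ℝ) + 1) ^ b * ρ ^ n) / y ^ (2 * b)) := by
        rw [← ENNReal.ofReal_tsum_of_nonneg (fun n => by positivity) (summable.mul_left _),
          tsum_mul_left, div_mul_eq_mul_div]

end Supremum

/-! ### Independent products -/

section Products

variable {Ω : Type*} [MeasurableSpace Ω] {P : Measure Ω} [IsFiniteMeasure P]

lemma lintegral_prodMk_of_indepFun {α β : Type*} [MeasurableSpace α] [MeasurableSpace β]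
    {Y : Ω → α} {θ : Ω → β} (hY : Measurable Y) (hθ : Measurable θ) (h : IndepFun Y θ P)
    {φ : α × β → ℝ≥0∞} (hφ : Measurable φ) :
    ∫⁻ ω, φ (Y ω, θ ω) ∂P = ∫⁻ ω, ∫⁻ ω', φ (Y ω', θ ω) ∂P ∂P :=
  calc ∫⁻ ω, φ (Y ω, θ ω) ∂P
      = ∫⁻ z, φ z ∂(P.map Y).prod (P.map θ) := by
        rw [← (indepFun_iff_map_prod_eq_prod_map_map hY.aemeasurable hθ.aemeasurable).1 h,
          lintegral_map hφ (hY.prodMk hθ)]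
    _ = ∫⁻ ω, ∫⁻ y, φ (y, θ ω) ∂(P.map Y) ∂P := by
        rw [lintegral_prod_symm' _ hφ, lintegral_map hφ.lintegral_prod_left' hθ]
    _ = ∫⁻ ω, ∫⁻ ω', φ (Y ω', θ ω) ∂P ∂P :=
        lintegral_congr fun ω => lintegral_map (hφ.comp measurable_prodMk_right) hY

variable {Y θ : Ω → ℝ}

lemma measure_lt_mul_eq_lintegral (hY : Measurable Y) (hθ : Measurable θ) (h : IndepFun Y θ P)
    (hθ₀ : ∀ ω, 0 < θ ω) (x : ℝ) :
    P {ω | x < Y ω * θ ω} = ∫⁻ ω, P {ω' | x / θ ω < Y ω'} ∂P := by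
  have hS : MeasurableSet {z : ℝ × ℝ | x < z.1 * z.2} :=
    measurableSet_lt measurable_const (by fun_prop)
  have key := lintegral_prodMk_of_indepFun hY hθ h
    ((measurable_indicator_const_iff (1 : ℝ≥0∞)).2 hS)
  have inner : ∀ ω, ∫⁻ ω', indicator {z : ℝ × ℝ | x < z.1 * z.2} (fun _ => 1) (Y ω', θ ω) ∂P =
      P {ω' | x / θ ω < Y ω'} := by
    intro ω
    simp only [div_lt_iff₀ (hθ₀ ω)]
    rw [← lintegral_indicator_one (measurableSet_lt measurable_const (hY.mul_const _))]
    rfl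
  simp only [inner] at key
  have product_meas : Measurable fun ω => Y ω * θ ω := hY.mul hθ
  rw [← key, ← lintegral_indicator_one (measurableSet_lt measurable_const product_meas)]
  rfl

section Tail

variable {g : ℝ → ℝ}

lemma antitone_of_tail_eq (hg : ∀ x, P.real {ω | x < Y ω} = g x) : Antitone g := by
  intro x y hxy
  rw [← hg, ← hg]
  exact measureReal_mono fun ω hω => hxy.trans_lt hω

lemma integrable_tail_div (hg : ∀ x, P.real {ω | x < Y ω} = g x) (hθ : Measurable θ) (x : ℝ) :
    Integrable (fun ω => g (x / θ ω)) P := by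
  refine .of_bound ((antitone_of_tail_eq hg).measurable.comp (by fun_prop)).aestronglyMeasurable
    (P.real univ) (.of_forall fun ω => ?_)
  rw [← hg, Real.norm_of_nonneg measureReal_nonneg]
  exact measureReal_mono (subset_univ _)

lemma measureReal_lt_mul_eq_integral (hY : Measurable Y) (hθ : Measurable θ)
    (h : IndepFun Y θ P) (hθ₀ : ∀ ω, 0 < θ ω) (hg : ∀ x, P.real {ω | x < Y ω} = g x) (x : ℝ) :
    P.real {ω | x < Y ω * θ ω} = ∫ ω, g (x / θ ω) ∂P := by
  have tail : ∀ ω, P {ω' | x / θ ω < Y ω'} = ENNReal.ofReal (g (x / θ ω)) := fun ω => by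
    rw [← hg, ofReal_measureReal]
  have g_nonneg : ∀ y, 0 ≤ g y := fun y => hg y ▸ measureReal_nonneg
  rw [measureReal_def, measure_lt_mul_eq_lintegral hY hθ h hθ₀]
  simp only [tail]
  rw [← ofReal_integral_eq_lintegral_ofReal (integrable_tail_div hg hθ x)
    (.of_forall fun ω => g_nonneg _), ENNReal.toReal_ofReal (integral_nonneg fun ω => g_nonneg _)]

end Tail

lemma lintegral_min_mul_rpow_le (hY : Measurable Y) (hθ : Measurable θ) (h : IndepFun Y θ P)
    (hθ₀ : ∀ ω, 0 < θ ω) (hθ₁ : ∀ ω, θ ω ≤ 1) (hY₀ : ∀ ω, 0 ≤ Y ω) {p K x₀ : ℝ}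
    (hx₀ : 0 < x₀) (hT : ∀ y, x₀ ≤ y → ∫⁻ ω, ENNReal.ofReal (min (Y ω) y ^ p) ∂P ≤
      ENNReal.ofReal (K * y ^ p) * P {ω | y < Y ω}) {x : ℝ} (hx : x₀ ≤ x) :
    ∫⁻ ω, ENNReal.ofReal (min (Y ω * θ ω) x ^ p) ∂P ≤
      ENNReal.ofReal (K * x ^ p) * P {ω | x < Y ω * θ ω} := by
  have x_pos : 0 < x := hx₀.trans_le hx
  have scaling : ∀ ω ω', min (Y ω' * θ ω) x ^ p = θ ω ^ p * min (Y ω') (x / θ ω) ^ p := by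
    intro ω ω'
    have hθω := hθ₀ ω
    rw [mul_comm (θ ω ^ p), ← Real.mul_rpow (le_min (hY₀ ω') (by positivity)) hθω.le,
      min_mul_of_nonneg _ _ hθω.le, div_mul_cancel₀ _ hθω.ne']
  rw [lintegral_prodMk_of_indepFun hY hθ h
      (φ := fun z : ℝ × ℝ => ENNReal.ofReal (min (z.1 * z.2) x ^ p)) (by fun_prop),
    measure_lt_mul_eq_lintegral hY hθ h hθ₀, ← lintegral_const_mul' _ _ ENNReal.ofReal_ne_top]
  refine lintegral_mono fun ω => ?_
  have hθω := hθ₀ ω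
  calc ∫⁻ ω', ENNReal.ofReal (min (Y ω' * θ ω) x ^ p) ∂P
      = ENNReal.ofReal (θ ω ^ p) * ∫⁻ ω', ENNReal.ofReal (min (Y ω') (x / θ ω) ^ p) ∂P := by
        rw [← lintegral_const_mul' _ _ ENNReal.ofReal_ne_top]
        refine lintegral_congr fun ω' => ?_
        rw [scaling, ENNReal.ofReal_mul (by positivity)]
    _ ≤ ENNReal.ofReal (θ ω ^ p) *
          (ENNReal.ofReal (K * (x / θ ω) ^ p) * P {ω' | x / θ ω < Y ω'}) := by
        gcongr
        exact hT _ (hx.trans (le_div_self x_pos.le hθω (hθ₁ ω)))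
    _ = ENNReal.ofReal (K * x ^ p) * P {ω' | x / θ ω < Y ω'} := by
        rw [← mul_assoc, ← ENNReal.ofReal_mul (by positivity), Real.div_rpow x_pos.le hθω.le]
        congr 2
        field_simp

end Products

/-! ### Truncated moments and sums of dependent variables -/

section Sums

variable {Ω : Type*} [MeasurableSpace Ω] {P : Measure Ω}

section

variable [IsFiniteMeasure P]

lemma identDistrib_of_tail_eq {Y Z : Ω → ℝ} (hY : Measurable Y) (hZ : Measurable Z)
    (h : ∀ x, P.real {ω | x < Y ω} = P.real {ω | x < Z ω}) : IdentDistrib Y Z P P := by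
  refine ⟨hY.aemeasurable, hZ.aemeasurable, ext_of_generate_finite _
    (BorelSpace.measurable_eq.trans (borel_eq_generateFrom_Ioi ℝ)) isPiSystem_Ioi ?_ ?_⟩
  · rintro - ⟨x, rfl⟩
    rw [Measure.map_apply hY measurableSet_Ioi, Measure.map_apply hZ measurableSet_Ioi]
    exact (measureReal_eq_measureReal_iff).1 (h x)
  · rw [Measure.map_apply hY .univ, Measure.map_apply hZ .univ, preimage_univ, preimage_univ]

lemma integrable_min_rpow {Y : Ω → ℝ} (hY : Measurable Y) (hY₀ : ∀ ω, 0 ≤ Y ω) {p y : ℝ}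
    (hp₀ : 0 ≤ p) (hy : 0 ≤ y) : Integrable (fun ω => min (Y ω) y ^ p) P := by
  refine .of_bound (by fun_prop) (y ^ p) (.of_forall fun ω => ?_)
  have min_nonneg : 0 ≤ min (Y ω) y := le_min (hY₀ ω) hy
  rw [Real.norm_of_nonneg (by positivity)]
  exact Real.rpow_le_rpow min_nonneg (min_le_right _ _) hp₀

lemma integral_min_mul_rpow_le {Y : Ω → ℝ} (hY : Measurable Y) (hY₀ : ∀ ω, 0 ≤ Y ω) {p v y : ℝ}
    (hp₀ : 0 ≤ p) (hv : 1 ≤ v) (hy : 0 ≤ y) :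
    ∫ ω, min (Y ω) (v * y) ^ p ∂P ≤
      ∫ ω, min (Y ω) y ^ p ∂P + (v * y) ^ p * P.real {ω | y < Y ω} := by
  have hvy : 0 ≤ v * y := by positivity
  have split : ∀ ω, min (Y ω) (v * y) ^ p ≤
      min (Y ω) y ^ p + {ω | y < Y ω}.indicator (fun _ => (v * y) ^ p) ω := by
    intro ω
    by_cases hω : ω ∈ {ω | y < Y ω}
    · rw [indicator_of_mem hω]
      exact (Real.rpow_le_rpow (le_min (hY₀ ω) hvy) (min_le_right _ _) hp₀).trans
        (le_add_of_nonneg_left (Real.rpow_nonneg (le_min (hY₀ ω) hy) p))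
    · have hle : Y ω ≤ y := not_lt.1 hω
      rw [indicator_of_notMem hω, add_zero, min_eq_left hle, min_eq_left]
      exact hle.trans (le_mul_of_one_le_left hy hv)
  have event_meas : MeasurableSet {ω | y < Y ω} := measurableSet_lt measurable_const hY
  have indicator_integrable := (integrable_const (μ := P) ((v * y) ^ p)).indicator event_meas
  have truncated_integrable := integrable_min_rpow (P := P) hY hY₀ hp₀ hy
  refine (integral_mono (integrable_min_rpow hY hY₀ hp₀ hvy)
    (truncated_integrable.add indicator_integrable) split).trans_eq ?_
  rw [integral_add' truncated_integrable indicator_integrable,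
    integral_indicator_const _ event_meas, smul_eq_mul, mul_comm (P.real _)]

end

lemma DominatedVariation.exists_lintegral_min_rpow_le [IsProbabilityMeasure P] {Y : Ω → ℝ}
    {g : ℝ → ℝ} (hD : DominatedVariation g) (hpos : ∀ x, 0 < g x)
    (hg : ∀ x, P.real {ω | x < Y ω} = g x)
    (hY : Measurable Y) (hY₀ : ∀ ω, 0 ≤ Y ω) {p : ℝ} (hp₀ : 0 ≤ p) (hp : Jplus g < p) :
    ∃ K > 0, ∃ x₀ > 0, ∀ y, x₀ ≤ y → ∫⁻ ω, ENNReal.ofReal (min (Y ω) y ^ p) ∂P ≤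
      ENNReal.ofReal (K * y ^ p) * P {ω | y < Y ω} := by
  have moment_le : ∀ y, 0 < y → ∫ ω, min (Y ω) y ^ p ∂P ≤ y ^ p := fun y hy => by
    simpa using integral_mono (integrable_min_rpow hY hY₀ hp₀ hy.le) (integrable_const (μ := P) _)
      fun ω => Real.rpow_le_rpow (le_min (hY₀ ω) hy.le) (min_le_right _ _) hp₀
  obtain ⟨K, hK, hT⟩ := hD.exists_le_mul_rpow_mul hpos (antitone_of_tail_eq hg) hp moment_le
    fun v y hv hy => hg y ▸ integral_min_mul_rpow_le hY hY₀ hp₀ hv hy.le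
  obtain ⟨x₀, hx₀, hT⟩ := exists_forall_ge_of_eventually hT
  refine ⟨K, hK, x₀, hx₀, fun y hy => ?_⟩
  have hy₀ : 0 < y := hx₀.trans_le hy
  rw [← ofReal_integral_eq_lintegral_ofReal (integrable_min_rpow hY hY₀ hp₀ hy₀.le)
      (.of_forall fun ω => Real.rpow_nonneg (le_min (hY₀ ω) hy₀.le) p),
    ← ofReal_measureReal, hg, ← ENNReal.ofReal_mul (by positivity)]
  exact ENNReal.ofReal_le_ofReal (hT y hy)

lemma eLpNorm_le_ofReal_of_lintegral_rpow_le {f : Ω → ℝ} (hf : ∀ ω, 0 ≤ f ω) {p c : ℝ}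
    (hp : 0 < p) (hc : 0 ≤ c)
    (h : ∫⁻ ω, ENNReal.ofReal (f ω ^ p) ∂P ≤ ENNReal.ofReal (c ^ p)) :
    eLpNorm f (ENNReal.ofReal p) P ≤ ENNReal.ofReal c := by
  have enorm_rpow : ∀ ω, ‖f ω‖ₑ ^ p = ENNReal.ofReal (f ω ^ p) := fun ω => by
    rw [Real.enorm_eq_ofReal (hf ω), ENNReal.ofReal_rpow_of_nonneg (hf ω) hp.le]
  rw [eLpNorm_eq_lintegral_rpow_enorm_toReal (by simpa using hp) ENNReal.ofReal_ne_top,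
    ENNReal.toReal_ofReal hp.le, one_div, ENNReal.rpow_inv_le_iff hp,
    ENNReal.ofReal_rpow_of_nonneg hc hp.le]
  simpa only [enorm_rpow] using h

lemma measure_le_of_eLpNorm_le {f : Ω → ℝ} (hf : AEStronglyMeasurable f P) {p y c : ℝ}
    (hp : 0 < p) (hy : 0 < y) (hc : 0 ≤ c)
    (h : eLpNorm f (ENNReal.ofReal p) P ≤ ENNReal.ofReal (y * c)) :
    P {ω | y ≤ |f ω|} ≤ ENNReal.ofReal (c ^ p) := by
  have markov := mul_meas_ge_le_pow_eLpNorm' P (ENNReal.ofReal_pos.2 hp).ne'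
    ENNReal.ofReal_ne_top hf (ENNReal.ofReal y)
  simp only [ENNReal.toReal_ofReal hp.le, ← ofReal_norm, Real.norm_eq_abs,
    ENNReal.ofReal_le_ofReal_iff (abs_nonneg _)] at markov
  have hyp : ENNReal.ofReal y ^ p ≠ 0 ∧ ENNReal.ofReal y ^ p ≠ ⊤ := by
    rw [ENNReal.ofReal_rpow_of_pos hy]
    exact ⟨(ENNReal.ofReal_pos.2 (by positivity)).ne', ENNReal.ofReal_ne_top⟩
  rw [← ENNReal.mul_le_mul_iff_right hyp.1 hyp.2]
  calc ENNReal.ofReal y ^ p * P {ω | y ≤ |f ω|}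
      ≤ ENNReal.ofReal (y * c) ^ p := markov.trans (by gcongr)
    _ = ENNReal.ofReal y ^ p * ENNReal.ofReal (c ^ p) := by
        rw [ENNReal.ofReal_mul hy.le, ENNReal.mul_rpow_of_nonneg _ _ hp.le,
          ENNReal.ofReal_rpow_of_nonneg hc hp.le]

lemma le_sum_min_of_lt_sum {ι : Type*} {s : Finset ι} {z : ι → ℝ} (hz : ∀ i ∈ s, 0 ≤ z i) {y : ℝ}
    (hy : 0 ≤ y) (h : y < ∑ i ∈ s, z i) : y ≤ ∑ i ∈ s, min (z i) y := by
  by_cases big : ∃ i ∈ s, y < z i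
  · obtain ⟨i, hi, hlt⟩ := big
    exact (min_eq_right hlt.le).symm.le.trans
      (Finset.single_le_sum (f := fun i => min (z i) y) (fun j hj => le_min (hz j hj) hy) hi)
  · push Not at big
    exact h.le.trans_eq (Finset.sum_congr rfl fun i hi => (min_eq_left (big i hi)).symm)

lemma measure_exists_lt_sum_le {Z : ℕ → Ω → ℝ} (hZ : ∀ i, Measurable (Z i))
    (hZ₀ : ∀ i ω, 0 ≤ Z i ω) {p y : ℝ} (hp : 1 ≤ p) (hy : 0 < y) {e : ℕ → ℝ} (he : Summable e)
    (he₀ : ∀ i, 0 ≤ e i)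
    (h : ∀ i, ∫⁻ ω, ENNReal.ofReal (min (Z i ω) y ^ p) ∂P ≤ ENNReal.ofReal ((y * e i) ^ p)) :
    P {ω | ∃ N : ℕ, y < ∑ i ∈ Finset.range N, Z i ω} ≤ ENNReal.ofReal ((∑' i, e i) ^ p) := by
  have p_pos : 0 < p := by linarith
  have W_meas : ∀ i, AEStronglyMeasurable (fun ω => min (Z i ω) y) P := fun i =>
    ((hZ i).min measurable_const).aestronglyMeasurable
  have minkowski : ∀ N, eLpNorm (∑ i ∈ Finset.range N, fun ω => min (Z i ω) y)
      (ENNReal.ofReal p) P ≤ ENNReal.ofReal (y * ∑' i, e i) := by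
    intro N
    calc eLpNorm (∑ i ∈ Finset.range N, fun ω => min (Z i ω) y) (ENNReal.ofReal p) P
        ≤ ∑ i ∈ Finset.range N, ENNReal.ofReal (y * e i) :=
          (eLpNorm_sum_le (fun i _ => W_meas i) (ENNReal.one_le_ofReal.2 hp)).trans
            (Finset.sum_le_sum fun i _ => eLpNorm_le_ofReal_of_lintegral_rpow_le
              (fun ω => le_min (hZ₀ i ω) hy.le) p_pos (mul_nonneg hy.le (he₀ i)) (h i))
      _ = ENNReal.ofReal (y * ∑ i ∈ Finset.range N, e i) := by
          rw [← ENNReal.ofReal_sum_of_nonneg fun i _ => mul_nonneg hy.le (he₀ i), Finset.mul_sum]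
      _ ≤ ENNReal.ofReal (y * ∑' i, e i) := by
          gcongr
          exact he.sum_le_tsum _ fun i _ => he₀ i
  have bound : ∀ N, P {ω | y < ∑ i ∈ Finset.range N, Z i ω} ≤
      ENNReal.ofReal ((∑' i, e i) ^ p) := by
    intro N
    refine (measure_mono fun ω hω => ?_).trans (measure_le_of_eLpNorm_le
      (Finset.aestronglyMeasurable_sum _ fun i _ => W_meas i) p_pos hy (tsum_nonneg he₀)
      (minkowski N))
    rw [mem_ofPred_eq, Finset.sum_apply]
    exact (le_sum_min_of_lt_sum (fun i _ => hZ₀ i ω) hy.le hω).trans (le_abs_self _)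
  have mono : Monotone fun N : ℕ => {ω | y < ∑ i ∈ Finset.range N, Z i ω} := fun a b hab ω hω =>
    lt_of_lt_of_le hω (Finset.sum_le_sum_of_subset_of_nonneg (Finset.range_mono hab)
      fun i _ _ => hZ₀ i ω)
  rw [ofPred_exists, mono.measure_iUnion]
  exact iSup_le bound

end Sums

lemma exists_lt_or_exists_pair_lt_of_lt_sum {z : ℕ → ℝ} {n : ℕ} {y δ : ℝ} (hδ : 0 < δ)
    (hyδ : δ ≤ y) (h : y < ∑ i ∈ Finset.range n, z i) :
    (∃ i ∈ Finset.range n, y - δ < z i) ∨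
      ∃ ij ∈ (Finset.range n).offDiag, δ / (n + 1) < z ij.1 ∧ δ / (n + 1) < z ij.2 := by
  by_contra! hcon
  obtain ⟨small, no_pair⟩ := hcon
  have nonempty : (Finset.range n).Nonempty := by
    by_contra! hempty
    rw [hempty, Finset.sum_empty] at h
    linarith
  obtain ⟨j, hj, hmax⟩ := Finset.exists_max_image (Finset.range n) z nonempty
  have others : ∀ i ∈ (Finset.range n).erase j, z i ≤ δ / (n + 1) := by
    intro i hi
    rw [Finset.mem_erase] at hi
    by_contra! hlt
    have := no_pair (i, j) (Finset.mem_offDiag.2 ⟨hi.2, hj, hi.1⟩) hlt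
    exact (hlt.trans_le (hmax i hi.2)).not_ge this
  have sum_others : ∑ i ∈ (Finset.range n).erase j, z i ≤ δ := by
    refine (Finset.sum_le_card_nsmul _ _ _ others).trans ?_
    have card_le : (((Finset.range n).erase j).card : ℝ) ≤ n + 1 := by
      have := Finset.card_le_card (Finset.erase_subset j (Finset.range n))
      rw [Finset.card_range] at this
      exact_mod_cast this.trans n.le_succ
    rw [nsmul_eq_mul]
    calc (((Finset.range n).erase j).card : ℝ) * (δ / (n + 1)) ≤ (n + 1) * (δ / (n + 1)) := by
          gcongr
      _ = δ := by field_simp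
  rw [← Finset.add_sum_erase _ _ hj] at h
  linarith [small j hj]

lemma sum_measureReal_le_biUnion_add_pairs {Ω : Type*} [MeasurableSpace Ω] {P : Measure Ω}
    [IsFiniteMeasure P] {E : ℕ → Set Ω} (hE : ∀ i, MeasurableSet (E i)) (n : ℕ) :
    ∑ i ∈ Finset.range n, P.real (E i) ≤ P.real (⋃ i ∈ Finset.range n, E i) +
      ∑ i ∈ Finset.range n, ∑ j ∈ Finset.range i, P.real (E i ∩ E j) := by
  induction n with
  | zero => simp
  | succ n ih =>
    rw [Finset.sum_range_succ, Finset.sum_range_succ, Finset.range_add_one,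
      Finset.set_biUnion_insert, union_comm]
    have inclusion_exclusion := measureReal_union_add_inter (μ := P)
      (s := ⋃ i ∈ Finset.range n, E i) (hE n)
      (measure_ne_top _ _) (measure_ne_top _ _)
    have overlap : P.real ((⋃ i ∈ Finset.range n, E i) ∩ E n) ≤
        ∑ j ∈ Finset.range n, P.real (E n ∩ E j) := by
      rw [inter_comm, inter_iUnion₂]
      exact measureReal_biUnion_finset_le _ _
    linarith

/-! ### Randomly weighted sums -/

/-- A sequence of nonnegative claims `Y i` with common tail `g` and weights `θ i ∈ (0, 1]`: the
tail is consistently varying, the claims are quasi asymptotically independent, each claim is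
independent of its own weight, and `p`, `q` are the moment orders that control the weights. -/
structure WeightedSumModel {Ω : Type*} [MeasurableSpace Ω] (P : Measure Ω) (g : ℝ → ℝ)
    (Y θ : ℕ → Ω → ℝ) (p q : ℝ) : Prop where
  measurable_claim : ∀ i, Measurable (Y i)
  claim_nonneg : ∀ i ω, 0 ≤ Y i ω
  tail_eq : ∀ i x, P.real {ω | x < Y i ω} = g x
  tail_pos : ∀ x, 0 < g x
  classC : ClassC g
  measurable_weight : ∀ i, Measurable (θ i)
  weight_pos : ∀ i ω, 0 < θ i ω
  weight_le_one : ∀ i ω, θ i ω ≤ 1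
  indepFun : ∀ i, IndepFun (Y i) (θ i) P
  qai : QAI P Y
  one_le : 1 ≤ p
  Jplus_lt : Jplus g < p
  pos : 0 < q
  lt_Jminus : q < Jminus g
  summable_moment : Summable fun i => (∫ ω, θ i ω ^ q ∂P) ^ (1 / p)

/-- The sum of the tails of the weighted claims `Y i * θ i`. -/
def weightedTailSum {Ω : Type*} [MeasurableSpace Ω] (P : Measure Ω) (Y θ : ℕ → Ω → ℝ)
    (x : ℝ) : ℝ :=
  ∑' i, P.real {ω | x < Y i ω * θ i ω}

namespace WeightedSumModel

variable {Ω : Type*} [MeasurableSpace Ω] {P : Measure Ω} {g : ℝ → ℝ} {Y θ : ℕ → Ω → ℝ} {p q : ℝ}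

lemma p_pos (h : WeightedSumModel P g Y θ p q) : 0 < p := zero_lt_one.trans_le h.one_le

lemma product_nonneg (h : WeightedSumModel P g Y θ p q) (i : ℕ) (ω : Ω) : 0 ≤ Y i ω * θ i ω :=
  mul_nonneg (h.claim_nonneg i ω) (h.weight_pos i ω).le

lemma measurable_product (h : WeightedSumModel P g Y θ p q) (i : ℕ) :
    Measurable fun ω => Y i ω * θ i ω :=
  (h.measurable_claim i).mul (h.measurable_weight i)

lemma moment_nonneg (h : WeightedSumModel P g Y θ p q) (i : ℕ) : 0 ≤ ∫ ω, θ i ω ^ q ∂P :=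
  integral_nonneg fun ω => Real.rpow_nonneg (h.weight_pos i ω).le q

lemma sum_big_subset (h : WeightedSumModel P g Y θ p q) {b s x : ℝ} (hb : 0 ≤ b) (hs : 0 < s)
    (hx : 0 < x) (n : ℕ) :
    {ω | ∃ N : ℕ, (b + 2 * s) * x < ∑ i ∈ Finset.range N, Y i ω * θ i ω} ⊆
      {ω | ∃ N : ℕ, s * x < ∑ i ∈ Finset.range N, Y (i + n) ω * θ (i + n) ω} ∪
        (⋃ i ∈ Finset.range n, {ω | b * x < Y i ω * θ i ω}) ∪
        {ω | ∃ ij ∈ (Finset.range n).offDiag, s / (n + 1) * x < Y ij.1 ω * θ ij.1 ω ∧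
          s / (n + 1) * x < Y ij.2 ω * θ ij.2 ω} := by
  rintro ω ⟨N, hN⟩
  by_cases remainder : ∃ N : ℕ, s * x < ∑ i ∈ Finset.range N, Y (i + n) ω * θ (i + n) ω
  · exact .inl (.inl remainder)
  push Not at remainder
  have head : (b + s) * x < ∑ i ∈ Finset.range n, Y i ω * θ i ω := by
    have extend : ∑ i ∈ Finset.range N, Y i ω * θ i ω ≤
        ∑ i ∈ Finset.range (n + N), Y i ω * θ i ω :=
      Finset.sum_le_sum_of_subset_of_nonneg (Finset.range_mono (Nat.le_add_left N n))
        fun i _ _ => h.product_nonneg i ω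
    rw [Finset.sum_range_add] at extend
    simp only [add_comm n] at extend
    linarith [remainder N]
  rcases exists_lt_or_exists_pair_lt_of_lt_sum (mul_pos hs hx)
    (by nlinarith : s * x ≤ (b + s) * x) head with ⟨i, hi, big⟩ | ⟨ij, hij, big⟩
  · refine .inl (.inr (mem_iUnion₂.2 ⟨i, hi, ?_⟩))
    rwa [← sub_mul, add_sub_cancel_right] at big
  · refine .inr ⟨ij, hij, ?_⟩
    rwa [mul_div_right_comm] at big

variable [IsProbabilityMeasure P]

lemma antitone_tail (h : WeightedSumModel P g Y θ p q) : Antitone g :=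
  antitone_of_tail_eq (h.tail_eq 0)

lemma dominatedVariation (h : WeightedSumModel P g Y θ p q) : DominatedVariation g :=
  h.classC.dominatedVariation h.tail_pos h.antitone_tail

lemma product_tail_eq (h : WeightedSumModel P g Y θ p q) (i : ℕ) (x : ℝ) :
    P.real {ω | x < Y i ω * θ i ω} = ∫ ω, g (x / θ i ω) ∂P :=
  measureReal_lt_mul_eq_integral (h.measurable_claim i) (h.measurable_weight i) (h.indepFun i)
    (h.weight_pos i) (h.tail_eq i) x

lemma integrable_tail (h : WeightedSumModel P g Y θ p q) (i : ℕ) (x : ℝ) :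
    Integrable (fun ω => g (x / θ i ω)) P :=
  integrable_tail_div (h.tail_eq i) (h.measurable_weight i) x

lemma integrable_weight_rpow (h : WeightedSumModel P g Y θ p q) (i : ℕ) :
    Integrable (fun ω => θ i ω ^ q) P := by
  refine .of_bound ((h.measurable_weight i).pow_const q).aestronglyMeasurable 1
    (.of_forall fun ω => ?_)
  rw [Real.norm_of_nonneg (Real.rpow_nonneg (h.weight_pos i ω).le q)]
  exact Real.rpow_le_one (h.weight_pos i ω).le (h.weight_le_one i ω) h.pos.le

lemma moment_le_rpow (h : WeightedSumModel P g Y θ p q) (i : ℕ) :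
    ∫ ω, θ i ω ^ q ∂P ≤ (∫ ω, θ i ω ^ q ∂P) ^ (1 / p) := by
  have le_one : ∫ ω, θ i ω ^ q ∂P ≤ 1 := by
    simpa using integral_mono (h.integrable_weight_rpow i) (integrable_const (μ := P) (1 : ℝ))
      fun ω => Real.rpow_le_one (h.weight_pos i ω).le (h.weight_le_one i ω) h.pos.le
  exact Real.self_le_rpow_of_le_one (h.moment_nonneg i) le_one
    ((div_le_one h.p_pos).2 h.one_le)

lemma summable_moment_one (h : WeightedSumModel P g Y θ p q) :
    Summable fun i => ∫ ω, θ i ω ^ q ∂P :=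
  .of_nonneg_of_le h.moment_nonneg h.moment_le_rpow h.summable_moment

lemma exists_product_tail_le (h : WeightedSumModel P g Y θ p q) :
    ∃ C > 0, ∀ᶠ x in atTop, ∀ i,
      P.real {ω | x < Y i ω * θ i ω} ≤ C * g x * ∫ ω, θ i ω ^ q ∂P := by
  obtain ⟨C, hC, x₀, -, potter⟩ := h.dominatedVariation.potter_bound h.tail_pos h.antitone_tail
    h.pos.le h.lt_Jminus
  refine ⟨C, hC, (eventually_ge_atTop x₀).mono fun x hx i => ?_⟩
  rw [h.product_tail_eq, ← integral_const_mul]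
  refine integral_mono (h.integrable_tail i x) ((h.integrable_weight_rpow i).const_mul _)
    fun ω => ?_
  have := potter x hx (θ i ω)⁻¹ ((one_le_inv₀ (h.weight_pos i ω)).2 (h.weight_le_one i ω))
  rw [Real.inv_rpow (h.weight_pos i ω).le, Real.rpow_neg (h.weight_pos i ω).le, inv_inv,
    inv_mul_eq_div] at this
  exact this.trans_eq (by ring)

lemma exists_product_tail_scale_le (h : WeightedSumModel P g Y θ p q) {η : ℝ} (hη : 0 < η) :
    ∃ b ∈ Ioo (0 : ℝ) 1, ∀ᶠ x in atTop, ∀ i,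
      P.real {ω | b * x < Y i ω * θ i ω} ≤ (1 + η) * P.real {ω | x < Y i ω * θ i ω} := by
  obtain ⟨b, hb, scale⟩ := h.classC.exists_eventually_le h.tail_pos hη
  obtain ⟨x₀, hx₀, scale⟩ := exists_forall_ge_of_eventually scale
  refine ⟨b, hb, (eventually_ge_atTop x₀).mono fun x hx i => ?_⟩
  rw [h.product_tail_eq, h.product_tail_eq, ← integral_const_mul]
  refine integral_mono (h.integrable_tail i _) ((h.integrable_tail i x).const_mul _) fun ω => ?_
  rw [mul_div_assoc]
  exact scale _ (hx.trans (le_div_self (hx₀.le.trans hx) (h.weight_pos i ω)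
    (h.weight_le_one i ω)))

lemma exists_mul_tail_le_product_tail (h : WeightedSumModel P g Y θ p q) (i : ℕ) :
    ∃ c > 0, ∀ᶠ x in atTop, c * g x ≤ P.real {ω | x < Y i ω * θ i ω} := by
  obtain ⟨t, ht, weight_big⟩ : ∃ t > 0, 0 < P.real {ω | t ≤ θ i ω} := by
    by_contra! hcon
    have null : ∀ n : ℕ, P {ω | 1 / ((n : ℝ) + 1) ≤ θ i ω} = 0 := fun n =>
      (measureReal_eq_zero_iff (measure_ne_top _ _)).1
        ((hcon _ Nat.one_div_pos_of_nat).antisymm measureReal_nonneg)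
    have cover : (univ : Set Ω) ⊆ ⋃ n : ℕ, {ω | 1 / ((n : ℝ) + 1) ≤ θ i ω} := fun ω _ =>
      mem_iUnion.2 ((exists_nat_one_div_lt (h.weight_pos i ω)).imp fun n hn => hn.le)
    exact one_ne_zero (measure_univ.symm.trans (measure_mono_null cover (measure_iUnion_null null)))
  obtain ⟨c, hc, dominated⟩ := h.dominatedVariation t⁻¹
  refine ⟨c * P.real {ω | t ≤ θ i ω}, by positivity, dominated.mono fun x hx => ?_⟩
  have joint : P.real ({ω | t⁻¹ * x < Y i ω} ∩ {ω | t ≤ θ i ω}) =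
      g (t⁻¹ * x) * P.real {ω | t ≤ θ i ω} := by
    have := (h.indepFun i).measure_inter_preimage_eq_mul (Ioi (t⁻¹ * x)) (Ici t)
      measurableSet_Ioi measurableSet_Ici
    rw [measureReal_def, ← h.tail_eq i, measureReal_def, measureReal_def, ← ENNReal.toReal_mul]
    exact congrArg ENNReal.toReal this
  calc c * P.real {ω | t ≤ θ i ω} * g x = c * g x * P.real {ω | t ≤ θ i ω} := by ring
    _ ≤ g (t⁻¹ * x) * P.real {ω | t ≤ θ i ω} := by gcongr
    _ = P.real ({ω | t⁻¹ * x < Y i ω} ∩ {ω | t ≤ θ i ω}) := joint.symm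
    _ ≤ P.real {ω | x < Y i ω * θ i ω} := by
        refine measureReal_mono fun ω ⟨(hY : t⁻¹ * x < Y i ω), (hθ : t ≤ θ i ω)⟩ => ?_
        have : x < Y i ω * t := by rwa [inv_mul_lt_iff₀ ht, mul_comm] at hY
        exact this.trans_le (mul_le_mul_of_nonneg_left hθ (h.claim_nonneg i ω))

lemma eventually_pair_le (h : WeightedSumModel P g Y θ p q) {i j : ℕ} (hij : i ≠ j) {s : ℝ}
    (hs : 0 < s) {η : ℝ} (hη : 0 < η) :
    ∀ᶠ x in atTop, P.real {ω | s * x < Y i ω * θ i ω ∧ s * x < Y j ω * θ j ω} ≤ η * g x := by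
  obtain ⟨c, hc, dominated⟩ := h.dominatedVariation s⁻¹
  have scale_tendsto : Tendsto (s * ·) atTop atTop := tendsto_id.const_mul_atTop hs
  have qai := (h.qai i j hij).eventually_lt_const (by positivity : (0 : ℝ) < η * c / 2)
  filter_upwards [scale_tendsto.eventually qai, scale_tendsto.eventually dominated] with x hx hgx
  simp only [← measureReal_def, h.tail_eq] at hx
  have tail_pos := h.tail_pos (s * x)
  rw [div_lt_iff₀ (by positivity)] at hx
  rw [inv_mul_cancel_left₀ hs.ne'] at hgx
  have le_claim : ∀ k ω, Y k ω * θ k ω ≤ Y k ω := fun k ω =>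
    mul_le_of_le_one_right (h.claim_nonneg k ω) (h.weight_le_one k ω)
  calc P.real {ω | s * x < Y i ω * θ i ω ∧ s * x < Y j ω * θ j ω}
      ≤ P.real {ω | s * x < Y i ω ∧ s * x < Y j ω} := measureReal_mono fun ω hω =>
        ⟨hω.1.trans_le (le_claim i ω), hω.2.trans_le (le_claim j ω)⟩
    _ ≤ η * (c * g (s * x)) := hx.le.trans_eq (by ring)
    _ ≤ η * g x := by gcongr

lemma exists_truncated_moment_le (h : WeightedSumModel P g Y θ p q) :
    ∃ K > 0, ∀ᶠ x in atTop, ∀ i, ∫⁻ ω, ENNReal.ofReal (min (Y i ω * θ i ω) x ^ p) ∂P ≤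
      ENNReal.ofReal (K * x ^ p * g x * ∫ ω, θ i ω ^ q ∂P) := by
  obtain ⟨C, hC, tail_le⟩ := h.exists_product_tail_le
  obtain ⟨K, hK, x₀, hx₀, truncated⟩ := h.dominatedVariation.exists_lintegral_min_rpow_le
    h.tail_pos (h.tail_eq 0) (h.measurable_claim 0) (h.claim_nonneg 0) h.p_pos.le h.Jplus_lt
  have truncated_all : ∀ i y, x₀ ≤ y → ∫⁻ ω, ENNReal.ofReal (min (Y i ω) y ^ p) ∂P ≤
      ENNReal.ofReal (K * y ^ p) * P {ω | y < Y i ω} := by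
    intro i y hy
    have ident : IdentDistrib (Y i) (Y 0) P P :=
      identDistrib_of_tail_eq (h.measurable_claim i) (h.measurable_claim 0) fun x => by
        rw [h.tail_eq, h.tail_eq]
    have moment_eq := (ident.comp
      (by fun_prop : Measurable fun z : ℝ => ENNReal.ofReal (min z y ^ p))).lintegral_eq
    refine moment_eq.trans_le ((truncated y hy).trans_eq ?_)
    rw [← ofReal_measureReal, ← ofReal_measureReal, h.tail_eq, h.tail_eq]
  refine ⟨K * C, by positivity, ?_⟩
  filter_upwards [tail_le, eventually_ge_atTop x₀] with x hx hx₀x i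
  have x_pos : 0 < x := hx₀.trans_le hx₀x
  refine (lintegral_min_mul_rpow_le (h.measurable_claim i) (h.measurable_weight i) (h.indepFun i)
    (h.weight_pos i) (h.weight_le_one i) (h.claim_nonneg i) hx₀ (truncated_all i) hx₀x).trans ?_
  rw [← ofReal_measureReal, ← ENNReal.ofReal_mul (by positivity)]
  apply ENNReal.ofReal_le_ofReal
  calc K * x ^ p * P.real {ω | x < Y i ω * θ i ω}
      ≤ K * x ^ p * (C * g x * ∫ ω, θ i ω ^ q ∂P) := by gcongr; exact hx i
    _ = K * C * x ^ p * g x * ∫ ω, θ i ω ^ q ∂P := by ring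

lemma exists_tail_sum_le (h : WeightedSumModel P g Y θ p q) :
    ∃ K > 0, ∀ᶠ x in atTop, ∀ n,
      P.real {ω | ∃ N : ℕ, x < ∑ i ∈ Finset.range N, Y (i + n) ω * θ (i + n) ω} ≤
        K * g x * (∑' i, (∫ ω, θ (i + n) ω ^ q ∂P) ^ (1 / p)) ^ p := by
  obtain ⟨K, hK, truncated⟩ := h.exists_truncated_moment_le
  refine ⟨K, hK, ?_⟩
  filter_upwards [truncated, eventually_gt_atTop 0] with x hx x_pos n
  have tail_pos := h.tail_pos x
  set c := (K * g x) ^ (1 / p) with hc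
  have c_rpow : c ^ p = K * g x := by
    rw [hc, one_div, Real.rpow_inv_rpow (by positivity) h.p_pos.ne']
  have moment_rpow_nonneg : ∀ i, 0 ≤ (∫ ω, θ i ω ^ q ∂P) ^ (1 / p) := fun i =>
    Real.rpow_nonneg (h.moment_nonneg i) _
  have moment_le : ∀ i, ∫⁻ ω, ENNReal.ofReal (min (Y (i + n) ω * θ (i + n) ω) x ^ p) ∂P ≤
      ENNReal.ofReal ((x * (c * (∫ ω, θ (i + n) ω ^ q ∂P) ^ (1 / p))) ^ p) := by
    intro i
    refine (hx (i + n)).trans_eq (congrArg ENNReal.ofReal ?_)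
    have := moment_rpow_nonneg (i + n)
    rw [Real.mul_rpow x_pos.le (by positivity), Real.mul_rpow (by positivity) this, c_rpow,
      one_div, Real.rpow_inv_rpow (h.moment_nonneg _) h.p_pos.ne']
    ring
  have sum_le := measure_exists_lt_sum_le (fun i => h.measurable_product (i + n))
    (fun i => h.product_nonneg (i + n)) h.one_le x_pos
    (((summable_nat_add_iff n).2 h.summable_moment).mul_left c)
    (fun i => mul_nonneg (by positivity) (moment_rpow_nonneg _)) moment_le
  rw [tsum_mul_left, Real.mul_rpow (by positivity) (tsum_nonneg fun i => moment_rpow_nonneg _),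
    c_rpow] at sum_le
  have sum_nonneg : 0 ≤ ∑' i, (∫ ω, θ (i + n) ω ^ q ∂P) ^ (1 / p) :=
    tsum_nonneg fun i => moment_rpow_nonneg (i + n)
  exact ENNReal.toReal_le_of_le_ofReal (by positivity) sum_le

lemma exists_eventually_remainder_le (h : WeightedSumModel P g Y θ p q) {s η : ℝ} (hs : 0 < s)
    (hη : 0 < η) :
    ∃ n, ∀ᶠ x in atTop,
      P.real {ω | ∃ N : ℕ, s * x < ∑ i ∈ Finset.range N, Y (i + n) ω * θ (i + n) ω} ≤
        η * g x := by
  obtain ⟨K, -, sum_le⟩ := h.exists_tail_sum_le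
  obtain ⟨c, hc, dominated⟩ := h.dominatedVariation s⁻¹
  have remainder_tendsto : Tendsto
      (fun n => K * (∑' i, (∫ ω, θ (i + n) ω ^ q ∂P) ^ (1 / p)) ^ p) atTop (𝓝 0) := by
    have := ((tendsto_sum_nat_add fun i => (∫ ω, θ i ω ^ q ∂P) ^ (1 / p)).rpow_const
      (.inr h.p_pos.le)).const_mul K
    rwa [Real.zero_rpow h.p_pos.ne', mul_zero] at this
  obtain ⟨n, hn⟩ := (remainder_tendsto.eventually_lt_const (by positivity : 0 < η * c)).exists
  have scale_tendsto : Tendsto (s * ·) atTop atTop := tendsto_id.const_mul_atTop hs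
  refine ⟨n, ?_⟩
  filter_upwards [scale_tendsto.eventually sum_le, scale_tendsto.eventually dominated]
    with x hx hgx
  rw [inv_mul_cancel_left₀ hs.ne'] at hgx
  have tail_pos := h.tail_pos (s * x)
  calc _ ≤ K * g (s * x) * (∑' i, (∫ ω, θ (i + n) ω ^ q ∂P) ^ (1 / p)) ^ p := hx n
    _ = K * (∑' i, (∫ ω, θ (i + n) ω ^ q ∂P) ^ (1 / p)) ^ p * g (s * x) := by ring
    _ ≤ η * c * g (s * x) := by gcongr
    _ ≤ η * g x := by rw [mul_assoc]; gcongr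

lemma eventually_summable_product_tail (h : WeightedSumModel P g Y θ p q) :
    ∀ᶠ x in atTop, Summable fun i => P.real {ω | x < Y i ω * θ i ω} := by
  obtain ⟨C, -, tail_le⟩ := h.exists_product_tail_le
  exact tail_le.mono fun x hx =>
    .of_nonneg_of_le (fun i => measureReal_nonneg) hx (h.summable_moment_one.mul_left _)

lemma exists_eventually_tail_series_le (h : WeightedSumModel P g Y θ p q) {η : ℝ} (hη : 0 < η) :
    ∃ n, ∀ᶠ x in atTop, weightedTailSum P Y θ x ≤
      ∑ i ∈ Finset.range n, P.real {ω | x < Y i ω * θ i ω} + η * g x := by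
  obtain ⟨C, hC, tail_le⟩ := h.exists_product_tail_le
  obtain ⟨n, hn⟩ := ((tendsto_sum_nat_add fun i => ∫ ω, θ i ω ^ q ∂P).eventually_lt_const
    (by positivity : 0 < η / C)).exists
  refine ⟨n, ?_⟩
  filter_upwards [tail_le, h.eventually_summable_product_tail] with x hx summable
  have tail_pos := h.tail_pos x
  rw [weightedTailSum, ← summable.sum_add_tsum_nat_add n]
  gcongr
  calc ∑' i, P.real {ω | x < Y (i + n) ω * θ (i + n) ω}
      ≤ ∑' i, C * g x * ∫ ω, θ (i + n) ω ^ q ∂P :=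
        ((summable_nat_add_iff n).2 summable).tsum_le_tsum (fun i => hx (i + n))
          (((summable_nat_add_iff n).2 h.summable_moment_one).mul_left _)
    _ = C * g x * ∑' i, ∫ ω, θ (i + n) ω ^ q ∂P := tsum_mul_left
    _ ≤ C * g x * (η / C) := by gcongr
    _ = η * g x := by field_simp

lemma exists_mul_tail_le_weightedTailSum (h : WeightedSumModel P g Y θ p q) :
    ∃ c > 0, ∀ᶠ x in atTop, c * g x ≤ weightedTailSum P Y θ x := by
  obtain ⟨c, hc, first_claim⟩ := h.exists_mul_tail_le_product_tail 0
  refine ⟨c, hc, ?_⟩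
  filter_upwards [first_claim, h.eventually_summable_product_tail] with x hx summable
  exact hx.trans (summable.le_tsum 0 fun i _ => measureReal_nonneg)

lemma eventually_exists_pair_le (h : WeightedSumModel P g Y θ p q) (n : ℕ) {s : ℝ} (hs : 0 < s)
    {η : ℝ} (hη : 0 < η) :
    ∀ᶠ x in atTop, P.real {ω | ∃ ij ∈ (Finset.range n).offDiag,
      s * x < Y ij.1 ω * θ ij.1 ω ∧ s * x < Y ij.2 ω * θ ij.2 ω} ≤ η * g x := by
  set I := (Finset.range n).offDiag
  have pair_le : ∀ᶠ x in atTop, ∀ ij ∈ I,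
      P.real {ω | s * x < Y ij.1 ω * θ ij.1 ω ∧ s * x < Y ij.2 ω * θ ij.2 ω} ≤
        η / (I.card + 1) * g x :=
    (Filter.eventually_all_finset I).2 fun ij hij =>
      h.eventually_pair_le (Finset.mem_offDiag.1 hij).2.2 hs (by positivity)
  filter_upwards [pair_le] with x hx
  have tail_pos := h.tail_pos x
  calc _ = P.real (⋃ ij ∈ I, {ω | s * x < Y ij.1 ω * θ ij.1 ω ∧ s * x < Y ij.2 ω * θ ij.2 ω}) := by
        congr 1
        ext ω
        simp only [mem_ofPred_eq, mem_iUnion, exists_prop]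
    _ ≤ ∑ ij ∈ I, η / (I.card + 1) * g x :=
        (measureReal_biUnion_finset_le _ _).trans (Finset.sum_le_sum hx)
    _ = I.card / (I.card + 1) * (η * g x) := by
        rw [Finset.sum_const, nsmul_eq_mul]
        field_simp
    _ ≤ η * g x := mul_le_of_le_one_left (by positivity) ((div_le_one (by positivity)).2 (by simp))

lemma exists_eventually_sum_big_le (h : WeightedSumModel P g Y θ p q) {η : ℝ} (hη : 0 < η) :
    ∃ a ∈ Ioo (0 : ℝ) 1, ∀ᶠ x in atTop,
      P.real {ω | ∃ N : ℕ, a * x < ∑ i ∈ Finset.range N, Y i ω * θ i ω} ≤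
        (1 + η) * weightedTailSum P Y θ x + η * g x := by
  obtain ⟨b, ⟨hb₀, hb₁⟩, scale⟩ := h.exists_product_tail_scale_le hη
  set s := (1 - b) / 4 with hs
  have s_pos : 0 < s := by linarith
  obtain ⟨n, remainder⟩ := h.exists_eventually_remainder_le s_pos (half_pos hη)
  have pairs := h.eventually_exists_pair_le n (by positivity : 0 < s / (n + 1)) (half_pos hη)
  refine ⟨b + 2 * s, ⟨by positivity, by linarith⟩, ?_⟩
  filter_upwards [scale, remainder, pairs, h.eventually_summable_product_tail,
    eventually_gt_atTop 0] with x hscale hremainder hpairs summable hx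
  have single : P.real (⋃ i ∈ Finset.range n, {ω | b * x < Y i ω * θ i ω}) ≤
      (1 + η) * weightedTailSum P Y θ x :=
    calc P.real (⋃ i ∈ Finset.range n, {ω | b * x < Y i ω * θ i ω})
        ≤ ∑ i ∈ Finset.range n, (1 + η) * P.real {ω | x < Y i ω * θ i ω} :=
          (measureReal_biUnion_finset_le _ _).trans (Finset.sum_le_sum fun i _ => hscale i)
      _ ≤ (1 + η) * weightedTailSum P Y θ x := by
          rw [← Finset.mul_sum]
          gcongr
          exact summable.sum_le_tsum _ fun i _ => measureReal_nonneg
  refine (measureReal_mono (h.sum_big_subset hb₀.le s_pos hx n)).trans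
    ((measureReal_union_le _ _).trans ?_)
  refine (add_le_add (measureReal_union_le _ _) hpairs).trans ?_
  linarith

lemma eventually_sum_pairs_le (h : WeightedSumModel P g Y θ p q) (n : ℕ) {η : ℝ} (hη : 0 < η) :
    ∀ᶠ x in atTop, ∑ i ∈ Finset.range n, ∑ j ∈ Finset.range i,
      P.real {ω | x < Y i ω * θ i ω ∧ x < Y j ω * θ j ω} ≤ η * g x := by
  have pair_isLittleO : ∀ i j, j < i → (fun x =>
      P.real {ω | x < Y i ω * θ i ω ∧ x < Y j ω * θ j ω}) =o[atTop] g := fun i j hji =>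
    Asymptotics.isLittleO_iff.2 fun ε hε => (h.eventually_pair_le hji.ne' one_pos hε).mono
      fun x hx => by
        simpa only [Real.norm_of_nonneg measureReal_nonneg, Real.norm_of_nonneg (h.tail_pos x).le,
          one_mul] using hx
  have sum_isLittleO : (fun x => ∑ i ∈ Finset.range n, ∑ j ∈ Finset.range i,
      P.real {ω | x < Y i ω * θ i ω ∧ x < Y j ω * θ j ω}) =o[atTop] g :=
    .fun_sum fun i _ => .fun_sum fun j hj => pair_isLittleO i j (Finset.mem_range.1 hj)
  exact (sum_isLittleO.bound hη).mono fun x hx =>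
    (le_abs_self _).trans (hx.trans_eq (by rw [Real.norm_of_nonneg (h.tail_pos x).le]))

lemma exists_eventually_weightedTailSum_le (h : WeightedSumModel P g Y θ p q) {η : ℝ}
    (hη : 0 < η) :
    ∃ s > 1, ∀ᶠ x in atTop, weightedTailSum P Y θ x ≤
      P.real {ω | ∃ i, s * x < Y i ω * θ i ω} + η * weightedTailSum P Y θ x + η * g x := by
  obtain ⟨b, ⟨hb₀, hb₁⟩, scale⟩ := h.exists_product_tail_scale_le hη
  obtain ⟨n, series⟩ := h.exists_eventually_tail_series_le (half_pos hη)
  have scale_tendsto : Tendsto (b⁻¹ * ·) atTop atTop := tendsto_id.const_mul_atTop (inv_pos.2 hb₀)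
  refine ⟨b⁻¹, (one_lt_inv₀ hb₀).2 hb₁, ?_⟩
  filter_upwards [scale_tendsto.eventually scale, series,
    scale_tendsto.eventually (h.eventually_sum_pairs_le n (half_pos hη)),
    h.eventually_summable_product_tail, eventually_gt_atTop 0]
    with x hscale hseries hpairs summable hx
  simp only [mul_inv_cancel_left₀ hb₀.ne'] at hscale
  have x_le : x ≤ b⁻¹ * x := le_mul_of_one_le_left hx.le ((one_le_inv₀ hb₀).2 hb₁.le)
  have single : ∀ i, P.real {ω | x < Y i ω * θ i ω} ≤
      P.real {ω | b⁻¹ * x < Y i ω * θ i ω} + η * P.real {ω | x < Y i ω * θ i ω} := by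
    intro i
    have : P.real {ω | b⁻¹ * x < Y i ω * θ i ω} ≤ P.real {ω | x < Y i ω * θ i ω} :=
      measureReal_mono fun ω hω => x_le.trans_lt hω
    nlinarith [hscale i]
  have bonferroni : ∑ i ∈ Finset.range n, P.real {ω | b⁻¹ * x < Y i ω * θ i ω} ≤
      P.real {ω | ∃ i, b⁻¹ * x < Y i ω * θ i ω} + η / 2 * g (b⁻¹ * x) := by
    refine (sum_measureReal_le_biUnion_add_pairs
      (fun i => measurableSet_lt measurable_const (h.measurable_product i)) n).trans
      (add_le_add (measureReal_mono ?_) hpairs)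
    exact iUnion₂_subset fun i _ ω hω => ⟨i, hω⟩
  have head := Finset.sum_le_sum fun i (_ : i ∈ Finset.range n) => single i
  rw [Finset.sum_add_distrib, ← Finset.mul_sum] at head
  have head_le : ∑ i ∈ Finset.range n, P.real {ω | x < Y i ω * θ i ω} ≤
      weightedTailSum P Y θ x := summable.sum_le_tsum _ fun i _ => measureReal_nonneg
  linarith [mul_le_mul_of_nonneg_left head_le hη.le,
    mul_le_mul_of_nonneg_left (h.antitone_tail x_le) (half_pos hη).le]

lemma isEquivalent_of_subset (h : WeightedSumModel P g Y θ p q) {R : ℝ → Set Ω}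
    {E : ℝ → ℝ → Set Ω} (hE : ∀ ε > 0, (fun x => P.real (E ε x)) =o[atTop] g)
    (upper : ∀ ε ∈ Ioo (0 : ℝ) 1, ∀ᶠ x in atTop, R x ⊆
      E ε x ∪ {ω | ∃ N : ℕ, (1 - ε) * x < ∑ i ∈ Finset.range N, Y i ω * θ i ω})
    (lower : ∀ ε > 0, ∀ᶠ x in atTop, {ω | ∃ i, (1 + ε) * x < Y i ω * θ i ω} ⊆ R x ∪ E ε x) :
    Asymptotics.IsEquivalent atTop (fun x => P.real (R x)) (weightedTailSum P Y θ) := by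
  obtain ⟨c, hc, tail_le⟩ := h.exists_mul_tail_le_weightedTailSum
  have exceptional : ∀ ε > 0, ∀ η > 0, ∀ᶠ x in atTop, P.real (E ε x) ≤ η * g x :=
    fun ε hε η hη => ((hE ε hε).bound hη).mono fun x hx => by
      rwa [Real.norm_of_nonneg measureReal_nonneg, Real.norm_of_nonneg (h.tail_pos x).le] at hx
  refine Asymptotics.isLittleO_iff.2 fun δ hδ => ?_
  set η := δ / (1 + 2 / c) with hη_def
  have hη : 0 < η := by positivity
  obtain ⟨a, ⟨ha₀, ha₁⟩, sum_le⟩ := h.exists_eventually_sum_big_le hη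
  obtain ⟨s, hs, le_max⟩ := h.exists_eventually_weightedTailSum_le hη
  filter_upwards [tail_le, sum_le, le_max, upper (1 - a) ⟨by linarith, by linarith⟩,
    lower (s - 1) (by linarith), exceptional (1 - a) (by linarith) η hη,
    exceptional (s - 1) (by linarith) η hη] with x htail hsum hmax hupper hlower hE₁ hE₂
  rw [sub_sub_cancel] at hupper
  rw [add_sub_cancel] at hlower
  have R_le := (measureReal_mono (μ := P) hupper).trans (measureReal_union_le _ _)
  have max_le := (measureReal_mono (μ := P) hlower).trans (measureReal_union_le _ _)
  have tail_le_sum : 2 * g x ≤ 2 / c * weightedTailSum P Y θ x := by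
    rw [div_mul_eq_mul_div, le_div_iff₀ hc]
    linarith
  have δ_eq : η * (weightedTailSum P Y θ x + 2 / c * weightedTailSum P Y θ x) =
      δ * weightedTailSum P Y θ x := by
    rw [hη_def]
    field_simp
  have bound := mul_le_mul_of_nonneg_left tail_le_sum hη.le
  have sum_nonneg : 0 ≤ weightedTailSum P Y θ x := tsum_nonneg fun i => measureReal_nonneg
  rw [Pi.sub_apply, Real.norm_of_nonneg sum_nonneg, Real.norm_eq_abs, abs_sub_le_iff]
  constructor <;> linarith

end WeightedSumModel

/-! ### Geometry of the ruin set -/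

lemma eventually_forall_le_mul {ι : Type*} [Finite ι] {a b : ι → ℝ} (hb : ∀ k, 0 < b k) :
    ∀ᶠ x in atTop, ∀ k, a k ≤ x * b k :=
  eventually_all.2 fun k => (tendsto_id.atTop_mul_const (hb k)).eventually_ge_atTop (a k)

/-- `A = l - L`, where `L` is a ruin set (Assumption 4.1) and `l` a positive allocation vector. -/
structure IsAllocatedRuinSet {d : ℕ} (A L : Set (Fin d → ℝ)) (l : Fin d → ℝ) : Prop where
  isOpen : IsOpen L
  sub_mem : ∀ z ∈ L, ∀ w : Fin d → ℝ, (∀ k, 0 ≤ w k) → z - w ∈ L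
  zero_mem_frontier : (0 : Fin d → ℝ) ∈ frontier L
  convex_compl : Convex ℝ Lᶜ
  smul_eq : ∀ y : ℝ, 0 < y → y • L = L
  allocation_pos : ∀ k, 0 < l k
  eq_image : A = (fun z => l - z) '' L

lemma projA_nonneg {d : ℕ} (A : Set (Fin d → ℝ)) (z : Fin d → ℝ) : 0 ≤ projA A z :=
  Real.sSup_nonneg fun _ hu => hu.1.le

namespace IsAllocatedRuinSet

variable {d : ℕ} {A L : Set (Fin d → ℝ)} {l : Fin d → ℝ}

lemma smul_mem_iff (h : IsAllocatedRuinSet A L l) {y : ℝ} (hy : 0 < y) {z : Fin d → ℝ} :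
    y • z ∈ L ↔ z ∈ L := by
  nth_rw 1 [← h.smul_eq y hy]
  exact smul_mem_smul_set_iff₀ hy.ne' L z

lemma mem_of_le (h : IsAllocatedRuinSet A L l) {a b : Fin d → ℝ} (hb : b ∈ L) (hab : a ≤ b) :
    a ∈ L := by
  simpa using h.sub_mem b hb (b - a) fun k => sub_nonneg.2 (hab k)

lemma notMem_of_nonneg (h : IsAllocatedRuinSet A L l) {z : Fin d → ℝ} (hz : 0 ≤ z) : z ∉ L := by
  have zero_notMem := h.zero_mem_frontier
  rw [h.isOpen.frontier_eq] at zero_notMem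
  exact fun hzL => zero_notMem.2 (h.mem_of_le hzL hz)

lemma add_notMem (h : IsAllocatedRuinSet A L l) {a b : Fin d → ℝ} (ha : a ∉ L) (hb : b ∉ L) :
    a + b ∉ L := by
  have midpoint := h.convex_compl ha hb one_half_pos.le one_half_pos.le (add_halves 1)
  rwa [← smul_add, mem_compl_iff, h.smul_mem_iff one_half_pos] at midpoint

lemma mem_smul_iff (h : IsAllocatedRuinSet A L l) {u : ℝ} (hu : 0 < u) (z : Fin d → ℝ) :
    z ∈ u • A ↔ u • l - z ∈ L := by
  have factor : u • l - z = u • (l - u⁻¹ • z) := by rw [smul_sub, smul_inv_smul₀ hu.ne']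
  rw [mem_smul_set_iff_inv_smul_mem₀ hu.ne', h.eq_image, factor, h.smul_mem_iff hu]
  refine ⟨fun ⟨w, hw, hwz⟩ => ?_, fun hz => ⟨_, hz, sub_sub_cancel _ _⟩⟩
  rwa [← hwz, sub_sub_cancel]

lemma bddAbove (h : IsAllocatedRuinSet A L l) (z : Fin d → ℝ) :
    BddAbove {u : ℝ | 0 < u ∧ z ∈ u • A} := by
  obtain ⟨U, hU⟩ := (eventually_forall_le_mul (a := z) h.allocation_pos).exists
  refine ⟨U, fun u ⟨hu, hz⟩ => not_lt.1 fun hlt => ?_⟩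
  refine h.notMem_of_nonneg (fun k => ?_) ((h.mem_smul_iff hu z).1 hz)
  exact sub_nonneg.2 ((hU k).trans (mul_le_mul_of_nonneg_right hlt.le (h.allocation_pos k).le))

lemma lt_projA_iff (h : IsAllocatedRuinSet A L l) {x : ℝ} (hx : 0 < x) (z : Fin d → ℝ) :
    x < projA A z ↔ x • l - z ∈ L := by
  constructor
  · intro hlt
    have nonempty : {u : ℝ | 0 < u ∧ z ∈ u • A}.Nonempty := by
      by_contra! hempty
      rw [projA, hempty, Real.sSup_empty] at hlt
      exact lt_asymm hx hlt
    obtain ⟨u, ⟨hu, hz⟩, hxu⟩ := exists_lt_of_lt_csSup nonempty hlt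
    refine h.mem_of_le ((h.mem_smul_iff hu z).1 hz) fun k => ?_
    exact sub_le_sub_right (mul_le_mul_of_nonneg_right hxu.le (h.allocation_pos k).le) _
  · intro hz
    have continuous_ray : Continuous fun u : ℝ => u • l - z := by fun_prop
    have near : ∀ᶠ u in 𝓝[>] x, u • l - z ∈ L := nhdsWithin_le_nhds
      (continuous_ray.continuousAt.eventually_mem (h.isOpen.mem_nhds hz))
    obtain ⟨u, huL, hxu⟩ := (near.and self_mem_nhdsWithin).exists
    have hu : 0 < u := hx.trans hxu
    exact hxu.trans_le (le_csSup (h.bddAbove z) ⟨hu, (h.mem_smul_iff hu z).2 huL⟩)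

lemma projA_le_iff (h : IsAllocatedRuinSet A L l) {x : ℝ} (hx : 0 < x) (z : Fin d → ℝ) :
    projA A z ≤ x ↔ x • l - z ∉ L := by
  rw [← h.lt_projA_iff hx, not_lt]

lemma projA_le_of_forall_gt (h : IsAllocatedRuinSet A L l) {y : ℝ} (hy : 0 ≤ y) {z : Fin d → ℝ}
    (hz : ∀ x, y < x → x • l - z ∉ L) : projA A z ≤ y :=
  le_of_forall_gt_imp_ge_of_dense fun x hx => (h.projA_le_iff (hy.trans_lt hx) z).2 (hz x hx)

lemma notMem_of_projA_lt (h : IsAllocatedRuinSet A L l) {x : ℝ} {z : Fin d → ℝ}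
    (hx : projA A z < x) : x • l - z ∉ L :=
  (h.projA_le_iff ((projA_nonneg A z).trans_lt hx) z).1 hx.le

lemma lowerSemicontinuous_projA (h : IsAllocatedRuinSet A L l) :
    LowerSemicontinuous (projA A) := by
  intro z y hy
  rcases lt_or_ge y 0 with hneg | hnonneg
  · exact .of_forall fun z' => hneg.trans_le (projA_nonneg A z')
  obtain ⟨u, hyu, huz⟩ := exists_between hy
  have hu : 0 < u := hnonneg.trans_lt hyu
  have continuous_sub : Continuous fun z' : Fin d → ℝ => u • l - z' := by fun_prop
  filter_upwards [continuous_sub.continuousAt.eventually_mem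
    (h.isOpen.mem_nhds ((h.lt_projA_iff hu z).1 huz))] with z' hz'
  exact hyu.trans ((h.lt_projA_iff hu z').2 hz')

lemma projA_mono (h : IsAllocatedRuinSet A L l) {a b : Fin d → ℝ} (hab : a ≤ b) :
    projA A a ≤ projA A b :=
  h.projA_le_of_forall_gt (projA_nonneg A b) fun _ hx ha =>
    h.notMem_of_projA_lt hx (h.mem_of_le ha (sub_le_sub_left hab _))

lemma projA_zero (h : IsAllocatedRuinSet A L l) : projA A 0 = 0 := by
  refine (h.projA_le_of_forall_gt le_rfl fun x hx => ?_).antisymm (projA_nonneg A 0)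
  rw [sub_zero]
  exact h.notMem_of_nonneg fun k => mul_nonneg hx.le (h.allocation_pos k).le

lemma projA_add_le (h : IsAllocatedRuinSet A L l) (a b : Fin d → ℝ) :
    projA A (a + b) ≤ projA A a + projA A b := by
  have ha := projA_nonneg A a
  have hb := projA_nonneg A b
  refine h.projA_le_of_forall_gt (by positivity) fun x hx => ?_
  set s := (x - projA A a - projA A b) / 2 with hs
  have split : x • l - (a + b) =
      ((projA A a + s) • l - a) + ((projA A b + s) • l - b) := by
    have x_eq : x = (projA A a + s) + (projA A b + s) := by rw [hs]; ring
    conv_lhs => rw [x_eq, add_smul]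
    abel
  rw [split]
  exact h.add_notMem (h.notMem_of_projA_lt (by linarith)) (h.notMem_of_projA_lt (by linarith))

lemma projA_sum_le (h : IsAllocatedRuinSet A L l) {ι : Type*} (s : Finset ι) (z : ι → Fin d → ℝ) :
    projA A (∑ i ∈ s, z i) ≤ ∑ i ∈ s, projA A (z i) :=
  Finset.le_sum_of_subadditive _ h.projA_zero.le h.projA_add_le s z

lemma projA_smul_le (h : IsAllocatedRuinSet A L l) {e : ℝ} (he : 0 < e) (z : Fin d → ℝ) :
    projA A (e • z) ≤ projA A z * e := by
  refine h.projA_le_of_forall_gt (mul_nonneg (projA_nonneg A z) he.le) fun x hx => ?_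
  have factor : x • l - e • z = e • ((x / e) • l - z) := by
    rw [smul_sub, smul_smul, mul_div_cancel₀ _ he.ne']
  rw [factor, h.smul_mem_iff he]
  exact h.notMem_of_projA_lt ((lt_div_iff₀ he).2 hx)

lemma projA_smul (h : IsAllocatedRuinSet A L l) {e : ℝ} (he : 0 < e) (z : Fin d → ℝ) :
    projA A (e • z) = projA A z * e := by
  refine (h.projA_smul_le he z).antisymm ?_
  have unscale := h.projA_smul_le (inv_pos.2 he) (e • z)
  rwa [inv_smul_smul₀ he.ne', ← div_eq_mul_inv, le_div_iff₀ he] at unscale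

lemma smul_mem_smul_iff_lt (h : IsAllocatedRuinSet A L l) {e x : ℝ} (he : 0 < e) (hx : 0 < x)
    (z : Fin d → ℝ) : e • z ∈ x • A ↔ x < projA A z * e := by
  rw [h.mem_smul_iff hx, ← h.lt_projA_iff hx, h.projA_smul he]

end IsAllocatedRuinSet

/-! ### The surplus process -/

lemma intervalIntegral_exp_neg_mul_le {s : ℝ} (hs : 0 < s) (t : ℝ) :
    ∫ u in (0 : ℝ)..t, Real.exp (-(s * u)) ≤ 1 / s := by
  have antideriv : ∀ u ∈ uIcc 0 t,
      HasDerivAt (fun u => -(Real.exp (-(s * u)) / s)) (Real.exp (-(s * u))) u := fun u _ => by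
    have linear : HasDerivAt (fun u => -(s * u)) (-(s * 1)) u :=
      ((hasDerivAt_id u).const_mul s).fun_neg
    exact (linear.exp.div_const s).fun_neg.congr_deriv (by field_simp)
  rw [intervalIntegral.integral_eq_sub_of_hasDerivAt antideriv
    (Continuous.intervalIntegrable (by fun_prop) _ _), mul_zero, neg_zero, Real.exp_zero]
  linarith [div_pos (Real.exp_pos (-(s * t))) hs]

lemma abs_intervalIntegral_le_div_of_le_exp {s C : ℝ} (hs : 0 < s) (hC : 0 ≤ C) {f : ℝ → ℝ}
    (hf : ∀ u, 0 ≤ u → |f u| ≤ C * Real.exp (-(s * u))) {t : ℝ} (ht : 0 ≤ t) :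
    |∫ u in (0 : ℝ)..t, f u| ≤ C / s :=
  calc ‖∫ u in (0 : ℝ)..t, f u‖ ≤ ∫ u in (0 : ℝ)..t, C * Real.exp (-(s * u)) :=
        intervalIntegral.norm_integral_le_of_norm_le ht (.of_forall fun u hu => hf u hu.1.le)
          (Continuous.intervalIntegrable (by fun_prop) _ _)
    _ ≤ C / s := by
        rw [intervalIntegral.integral_const_mul, ← mul_one_div]
        exact mul_le_mul_of_nonneg_left (intervalIntegral_exp_neg_mul_le hs t) hC

lemma abs_discBM_le {Ω : Type*} {r y : ℝ} (hr : 0 < r) {W : ℝ → Ω → ℝ} {ω : Ω}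
    (hW : ∀ t, 0 ≤ t → |W t ω| ≤ y * Real.exp (r / 2 * t)) {t : ℝ} (ht : 0 ≤ t) :
    |discBM r W t ω| ≤ 3 * y := by
  have hy : 0 ≤ y := by simpa using (abs_nonneg _).trans (hW 0 le_rfl)
  have discounted : ∀ u, 0 ≤ u →
      |Real.exp (-(r * u)) * W u ω| ≤ y * Real.exp (-(r / 2 * u)) := by
    intro u hu
    rw [abs_mul, abs_of_pos (Real.exp_pos _)]
    calc Real.exp (-(r * u)) * |W u ω| ≤ Real.exp (-(r * u)) * (y * Real.exp (r / 2 * u)) := by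
          gcongr; exact hW u hu
      _ = y * (Real.exp (-(r * u)) * Real.exp (r / 2 * u)) := by ring
      _ = y * Real.exp (-(r / 2 * u)) := by rw [← Real.exp_add]; ring_nf
  have exp_le_one : Real.exp (-(r / 2 * t)) ≤ 1 :=
    Real.exp_le_one_iff.2 (neg_nonpos.2 (by positivity))
  calc |discBM r W t ω|
      ≤ |Real.exp (-(r * t)) * W t ω| + r * |∫ s in (0 : ℝ)..t, Real.exp (-(r * s)) * W s ω| := by
        rw [← abs_of_pos hr, ← abs_mul, abs_of_pos hr]
        exact abs_add_le _ _
    _ ≤ y * 1 + r * (y / (r / 2)) := by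
        gcongr
        · exact (discounted t ht).trans (by gcongr)
        · exact abs_intervalIntegral_le_div_of_le_exp (half_pos hr) hy discounted ht
    _ = 3 * y := by field_simp; ring

lemma ae_tendsto_zero_of_summable_integral {Ω : Type*} [MeasurableSpace Ω] {P : Measure Ω}
    {f : ℕ → Ω → ℝ} (hf : ∀ i ω, 0 ≤ f i ω) (hint : ∀ i, Integrable (f i) P)
    (hsum : Summable fun i => ∫ ω, f i ω ∂P) :
    ∀ᵐ ω ∂P, Tendsto (fun i => f i ω) atTop (𝓝 0) := by
  have lintegral_ne_top : ∫⁻ ω, ∑' i, ENNReal.ofReal (f i ω) ∂P ≠ ∞ := by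
    rw [lintegral_tsum fun i => (hint i).aemeasurable.ennreal_ofReal]
    simp only [← ofReal_integral_eq_lintegral_ofReal (hint _) (.of_forall (hf _))]
    exact hsum.tsum_ofReal_ne_top
  filter_upwards [ae_lt_top' (.tsum fun i => (hint i).aemeasurable.ennreal_ofReal)
    lintegral_ne_top] with ω hω
  have toReal_tendsto := (ENNReal.tendsto_toReal ENNReal.zero_ne_top).comp
    (ENNReal.tendsto_atTop_zero_of_tsum_ne_top hω.ne)
  simpa only [Function.comp_def, ENNReal.toReal_ofReal (hf _ ω), ENNReal.toReal_zero] using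
    toReal_tendsto

/-- A scenario in which only finitely many claims arrive in finite time and every component of the
perturbation stays below `y * exp (r / 2 * t)`, half the discount rate. -/
structure IsRegularPath {Ω : Type*} {d : ℕ} (r : ℝ) (τ : ℕ → Ω → ℝ) (Bm : Fin d → ℝ → Ω → ℝ)
    (y : ℝ) (ω : Ω) : Prop where
  tendsto_arrival : Tendsto (fun i => τ i ω) atTop atTop
  abs_perturbation_le : ∀ k t, 0 ≤ t → |Bm k t ω| ≤ y * Real.exp (r / 2 * t)

lemma isLittleO_measure_exists_exp_lt {Ω : Type*} [MeasurableSpace Ω] {P : Measure Ω}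
    {W : ℝ → Ω → ℝ} (hW₀ : ∀ ω, W 0 ω = 0) (hW : ∀ t, Measurable (W t))
    (hcont : ∀ᵐ ω ∂P, Continuous fun t => W t ω)
    (hgauss : ∀ s t : ℝ, 0 ≤ s → s < t →
      P.map (fun ω => W t ω - W s ω) = gaussianReal 0 (t - s).toNNReal)
    {g : ℝ → ℝ} {C p : ℝ} (hg : ∀ᶠ x in atTop, 1 ≤ C * x ^ p * g x) {s a : ℝ} (hs : 0 < s)
    (ha : 0 < a) :
    (fun x => P.real {ω | ∃ t, 0 ≤ t ∧ a * x * Real.exp (s * t) < |W t ω|}) =o[atTop] g := by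
  obtain ⟨b, hb⟩ := exists_nat_ge (max p 2)
  have hpb : p ≤ b := (le_max_left p 2).trans hb
  have hb₂ : 2 ≤ b := by exact_mod_cast (le_max_right p 2).trans hb
  obtain ⟨c, hc, increments⟩ := exists_incrementTailBound_of_gaussian hW hgauss (by omega : b ≠ 0)
  obtain ⟨K, hK, tail⟩ := increments.sup_exp_weighted hc hW₀ hcont hb₂ hs
  have rate : Tendsto (fun x : ℝ => K * |C| / a ^ (2 * b) / x ^ b) atTop (𝓝 0) :=
    tendsto_const_nhds.div_atTop (tendsto_pow_atTop (by omega))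
  refine Asymptotics.isLittleO_iff.2 fun η hη => ?_
  filter_upwards [rate.eventually_le_const hη, hg, eventually_ge_atTop 1] with x hrate hgx hx
  have x_pos : 0 < x := by linarith
  have rpow_le : x ^ p ≤ x ^ b := by
    rw [← Real.rpow_natCast]
    exact Real.rpow_le_rpow_of_exponent_le hx hpb
  have one_le : 1 ≤ |C| * x ^ b * |g x| := by
    refine hgx.trans ((le_abs_self _).trans ?_)
    rw [abs_mul, abs_mul, abs_of_pos (Real.rpow_pos_of_pos x_pos p)]
    gcongr
  rw [Real.norm_of_nonneg measureReal_nonneg, Real.norm_eq_abs]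
  calc _ ≤ K / (a * x) ^ (2 * b) :=
        ENNReal.toReal_le_of_le_ofReal (by positivity) (tail _ (by positivity))
    _ ≤ K / (a * x) ^ (2 * b) * (|C| * x ^ b * |g x|) :=
        le_mul_of_one_le_right (by positivity) one_le
    _ = K * |C| / a ^ (2 * b) / x ^ b * |g x| := by rw [mul_pow, pow_mul' x]; field_simp
    _ ≤ η * |g x| := by gcongr

lemma isLittleO_measure_not_isRegularPath_of_forall {Ω : Type*} [MeasurableSpace Ω] {P : Measure Ω}
    [IsFiniteMeasure P] {d : ℕ} {r : ℝ} {τ : ℕ → Ω → ℝ} {Bm : Fin d → ℝ → Ω → ℝ}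
    (hτ : ∀ᵐ ω ∂P, Tendsto (fun i => τ i ω) atTop atTop) {g : ℝ → ℝ} {a : ℝ}
    (hB : ∀ k, (fun x => P.real {ω | ∃ t, 0 ≤ t ∧ a * x * Real.exp (r / 2 * t) < |Bm k t ω|})
      =o[atTop] g) :
    (fun x => P.real {ω | ¬ IsRegularPath r τ Bm (a * x) ω}) =o[atTop] g := by
  have cover : ∀ x, {ω | ¬ IsRegularPath r τ Bm (a * x) ω} ≤ᵐ[P]
      ⋃ k, {ω | ∃ t, 0 ≤ t ∧ a * x * Real.exp (r / 2 * t) < |Bm k t ω|} := fun x => by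
    filter_upwards [hτ] with ω hω hnot
    by_contra hsmall
    exact hnot ⟨hω, fun k t ht => not_lt.1 fun hlt => hsmall (mem_iUnion.2 ⟨k, t, ht, hlt⟩)⟩
  refine (Asymptotics.IsBigO.of_norm_le fun x => ?_).trans_isLittleO
    (.fun_sum fun k (_ : k ∈ Finset.univ) => hB k)
  rw [Real.norm_of_nonneg measureReal_nonneg]
  exact (ENNReal.toReal_mono (measure_ne_top _ _) (measure_mono_ae (cover x))).trans
    (measureReal_iUnion_fintype_le _)

/-! ### Reduction of ruin to a weighted sum -/

section Claims

variable {Ω : Type*} {d : ℕ} {A L : Set (Fin d → ℝ)} {l : Fin d → ℝ} {r : ℝ}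
  {X : ℕ → Ω → Fin d → ℝ} {τ : ℕ → Ω → ℝ} {ω : Ω}

lemma exists_Dfin_eq_sum (hτ : Tendsto (fun i => τ i ω) atTop atTop) (T : ℝ) :
    ∃ s : Finset ℕ, (∀ i, i ∈ s ↔ τ i ω ≤ T) ∧
      Dfin r X τ T ω = ∑ i ∈ s, Real.exp (-(r * τ i ω)) • X i ω := by
  have finite_arrivals : {i | τ i ω ≤ T}.Finite := by
    simpa only [← Nat.cofinite_eq_atTop, eventually_cofinite, not_lt] using
      hτ.eventually_gt_atTop T
  have mem_iff : ∀ i, i ∈ finite_arrivals.toFinset ↔ τ i ω ≤ T := fun i => Finite.mem_toFinset _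
  refine ⟨finite_arrivals.toFinset, mem_iff, ?_⟩
  refine (tsum_eq_sum fun i hi => ?_).trans (Finset.sum_congr rfl fun i hi => ?_)
  · exact indicator_of_notMem (s := {ω' | τ i ω' ≤ T}) (fun hle => hi ((mem_iff i).2 hle)) _
  · exact indicator_of_mem (s := {ω' | τ i ω' ≤ T}) ((mem_iff i).1 hi) _

lemma smul_le_Dfin (hX : ∀ i, 0 ≤ X i ω) (hτ : Tendsto (fun i => τ i ω) atTop atTop) (i : ℕ) :
    Real.exp (-(r * τ i ω)) • X i ω ≤ Dfin r X τ (τ i ω) ω := by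
  obtain ⟨s, mem_iff, Dfin_eq⟩ := exists_Dfin_eq_sum (r := r) (X := X) hτ (τ i ω)
  rw [Dfin_eq]
  exact Finset.single_le_sum (f := fun j => Real.exp (-(r * τ j ω)) • X j ω)
    (fun j _ => smul_nonneg (Real.exp_pos _).le (hX j)) ((mem_iff i).2 le_rfl)

namespace IsAllocatedRuinSet

lemma exists_projA_Dfin_le_sum (h : IsAllocatedRuinSet A L l)
    (hτ : Tendsto (fun i => τ i ω) atTop atTop) (T : ℝ) :
    ∃ N, projA A (Dfin r X τ T ω) ≤
      ∑ i ∈ Finset.range N, projA A (X i ω) * Real.exp (-(r * τ i ω)) := by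
  obtain ⟨s, -, Dfin_eq⟩ := exists_Dfin_eq_sum (r := r) (X := X) hτ T
  obtain ⟨N, hsN⟩ := s.exists_nat_subset_range
  refine ⟨N, ?_⟩
  calc projA A (Dfin r X τ T ω) ≤ ∑ i ∈ s, projA A (Real.exp (-(r * τ i ω)) • X i ω) := by
        rw [Dfin_eq]; exact h.projA_sum_le _ _
    _ = ∑ i ∈ s, projA A (X i ω) * Real.exp (-(r * τ i ω)) := by
        simp only [h.projA_smul (Real.exp_pos _)]
    _ ≤ _ := Finset.sum_le_sum_of_subset_of_nonneg hsN fun i _ _ =>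
        mul_nonneg (projA_nonneg A _) (Real.exp_pos _).le

lemma exists_lt_sum_of_sub_Dfin_mem (h : IsAllocatedRuinSet A L l)
    (hτ : Tendsto (fun i => τ i ω) atTop atTop) {y T : ℝ} (hy : 0 < y)
    (hmem : y • l - Dfin r X τ T ω ∈ L) :
    ∃ N, y < ∑ i ∈ Finset.range N, projA A (X i ω) * Real.exp (-(r * τ i ω)) :=
  (h.exists_projA_Dfin_le_sum hτ T).imp fun _ => ((h.lt_projA_iff hy _).2 hmem).trans_le

lemma sub_Dfin_mem_of_lt (h : IsAllocatedRuinSet A L l) (hX : ∀ i, 0 ≤ X i ω)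
    (hτ : Tendsto (fun i => τ i ω) atTop atTop) {y : ℝ} (hy : 0 < y) {i : ℕ}
    (hlt : y < projA A (X i ω) * Real.exp (-(r * τ i ω))) :
    y • l - Dfin r X τ (τ i ω) ω ∈ L := by
  rw [← h.lt_projA_iff hy]
  rw [← h.projA_smul (Real.exp_pos _)] at hlt
  exact hlt.trans_le (h.projA_mono (smul_le_Dfin hX hτ i))

end IsAllocatedRuinSet

lemma intervalIntegral_discounted_mem_Icc {f : ℝ → ℝ} {M : ℝ} (hr : 0 < r) (hf₀ : ∀ s, 0 ≤ f s)
    (hfM : ∀ s, f s ≤ M) {t : ℝ} (ht : 0 ≤ t) :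
    ∫ s in (0 : ℝ)..t, Real.exp (-(r * s)) * f s ∈ Icc 0 (M / r) := by
  have integrand_nonneg : ∀ s, 0 ≤ Real.exp (-(r * s)) * f s := fun s =>
    mul_nonneg (Real.exp_pos _).le (hf₀ s)
  refine ⟨intervalIntegral.integral_nonneg ht fun s _ => integrand_nonneg s, (le_abs_self _).trans
    (abs_intervalIntegral_le_div_of_le_exp hr ((hf₀ 0).trans (hfM 0)) (fun s _ => ?_) ht)⟩
  rw [abs_of_nonneg (integrand_nonneg s), mul_comm]
  exact mul_le_mul_of_nonneg_right (hfM s) (Real.exp_pos _).le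

lemma IsRegularPath.surplus_mem_Icc {Bm : Fin d → ℝ → Ω → ℝ} {ε U x : ℝ}
    (hω : IsRegularPath r τ Bm (ε / (6 * U) * x) ω) (hr : 0 < r) (hε : 0 < ε) (hU : 0 < U)
    (hx : 0 < x) {c : Fin d → ℝ → Ω → ℝ} {M : Fin d → ℝ} (hc₀ : ∀ k s, 0 ≤ c k s ω)
    (hcM : ∀ k s, c k s ω ≤ M k) (hM : ∀ k, M k / r ≤ x * (ε / 2 * l k))
    {δv : Fin d → ℝ} (hδ₀ : ∀ k, 0 ≤ δv k) (hδU : ∀ k, δv k ≤ U * l k) {t : ℝ} (ht : 0 ≤ t) :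
    surplus r x l c δv Bm X τ t ω ∈
      Icc (((1 - ε) * x) • l - Dfin r X τ t ω) (((1 + ε) * x) • l - Dfin r X τ t ω) := by
  have premium k := intervalIntegral_discounted_mem_Icc hr (hc₀ k) (hcM k) ht
  have perturbation : ∀ k, |δv k * discBM r (Bm k) t ω| ≤ x * (ε / 2 * l k) := by
    intro k
    calc |δv k * discBM r (Bm k) t ω| ≤ δv k * (3 * (ε / (6 * U) * x)) := by
          rw [abs_mul, abs_of_nonneg (hδ₀ k)]
          exact mul_le_mul_of_nonneg_left (abs_discBM_le hr (hω.abs_perturbation_le k) ht) (hδ₀ k)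
      _ ≤ U * l k * (3 * (ε / (6 * U) * x)) := by gcongr; exact hδU k
      _ = x * (ε / 2 * l k) := by field_simp; ring
  refine ⟨fun k => ?_, fun k => ?_⟩
  all_goals
    simp only [surplus, Pi.sub_apply, Pi.smul_apply, smul_eq_mul]
    linarith [(premium k).1, (premium k).2, hM k, abs_le.1 (perturbation k)]

end Claims

section Model

variable {Ω : Type*} [MeasurableSpace Ω] {P : Measure Ω} {d : ℕ} {A L : Set (Fin d → ℝ)}
  {l : Fin d → ℝ} {r : ℝ} {F : Measure (Fin d → ℝ)} {X : ℕ → Ω → Fin d → ℝ} {τ : ℕ → Ω → ℝ}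
  {p q : ℝ}

lemma exp_neg_rpow (t q : ℝ) : Real.exp (-t) ^ q = Real.exp (-(q * t)) := by
  rw [← Real.exp_mul, neg_mul, mul_comm]

lemma IsAllocatedRuinSet.weightedSumModel (h : IsAllocatedRuinSet A L l) (hr : 0 < r)
    (hXmeas : ∀ i, Measurable (X i)) (hτmeas : ∀ i, Measurable (τ i))
    (hXdist : ∀ i, P.map (X i) = F) (hτnn : ∀ i ω, 0 ≤ τ i ω)
    (hindep : ∀ i, IndepFun (X i) (τ i) P)
    (hFpos : ∀ x : ℝ, 0 < tailA A F x) (hFC : ClassC (tailA A F))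
    (hp : 1 ≤ p) (hJp : Jplus (tailA A F) < p) (hq : 0 < q) (hqJ : q < Jminus (tailA A F))
    (hmom : Summable fun i => (∫ ω, Real.exp (-(q * (r * τ i ω))) ∂P) ^ (1 / p))
    (hQAI : QAIA P A X) :
    WeightedSumModel P (tailA A F) (fun i ω => projA A (X i ω))
      (fun i ω => Real.exp (-(r * τ i ω))) p q where
  measurable_claim i := h.lowerSemicontinuous_projA.measurable.comp (hXmeas i)
  claim_nonneg _ _ := projA_nonneg A _
  tail_eq i x := by
    rw [tailA, ← hXdist i]
    exact congrArg ENNReal.toReal (Measure.map_apply (hXmeas i)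
      (h.lowerSemicontinuous_projA.measurable measurableSet_Ioi)).symm
  tail_pos := hFpos
  classC := hFC
  measurable_weight i := by have := hτmeas i; fun_prop
  weight_pos _ _ := Real.exp_pos _
  weight_le_one i ω := Real.exp_le_one_iff.2 (neg_nonpos.2 (mul_nonneg hr.le (hτnn i ω)))
  indepFun i := (hindep i).comp (ψ := fun t => Real.exp (-(r * t)))
    h.lowerSemicontinuous_projA.measurable (by fun_prop)
  qai := hQAI
  one_le := hp
  Jplus_lt := hJp
  pos := hq
  lt_Jminus := hqJ
  summable_moment := by simpa only [exp_neg_rpow] using hmom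

lemma WeightedSumModel.ae_tendsto_arrival [IsProbabilityMeasure P] {g : ℝ → ℝ} {Y : ℕ → Ω → ℝ}
    (h : WeightedSumModel P g Y (fun i ω => Real.exp (-(r * τ i ω))) p q) (hr : 0 < r) :
    ∀ᵐ ω ∂P, Tendsto (fun i => τ i ω) atTop atTop := by
  filter_upwards [ae_tendsto_zero_of_summable_integral
    (fun i ω => Real.rpow_nonneg (h.weight_pos i ω).le q) h.integrable_weight_rpow
    h.summable_moment_one] with ω hω
  simpa only [exp_neg_rpow, Real.tendsto_exp_comp_nhds_zero, tendsto_neg_atBot_iff,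
    tendsto_const_mul_atTop_of_pos h.pos, tendsto_const_mul_atTop_of_pos hr] using hω

lemma WeightedSumModel.isLittleO_measure_not_isRegularPath [IsProbabilityMeasure P] {g : ℝ → ℝ}
    {Y : ℕ → Ω → ℝ} (h : WeightedSumModel P g Y (fun i ω => Real.exp (-(r * τ i ω))) p q)
    (hr : 0 < r) {Bm : Fin d → ℝ → Ω → ℝ} (hB0 : ∀ k ω, Bm k 0 ω = 0)
    (hBmeas : ∀ k t, Measurable (Bm k t))
    (hBcont : ∀ᵐ ω ∂P, ∀ k, Continuous fun t => Bm k t ω)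
    (hBgauss : ∀ k, ∀ s t : ℝ, 0 ≤ s → s < t →
      P.map (fun ω => Bm k t ω - Bm k s ω) = gaussianReal 0 (t - s).toNNReal)
    {a : ℝ} (ha : 0 < a) :
    (fun x => P.real {ω | ¬ IsRegularPath r τ Bm (a * x) ω}) =o[atTop] g := by
  obtain ⟨C, -, one_le⟩ := h.dominatedVariation.exists_one_le_mul_rpow_mul h.tail_pos
    h.antitone_tail h.p_pos.le h.Jplus_lt
  exact isLittleO_measure_not_isRegularPath_of_forall (h.ae_tendsto_arrival hr) fun k =>
    isLittleO_measure_exists_exp_lt (hB0 k) (hBmeas k) (hBcont.mono fun _ hω => hω k) (hBgauss k)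
      one_le (half_pos hr) ha

lemma WeightedSumModel.isEquivalent_ruin [IsProbabilityMeasure P] {g : ℝ → ℝ}
    (h : WeightedSumModel P g (fun i ω => projA A (X i ω)) (fun i ω => Real.exp (-(r * τ i ω))) p q)
    (hL : IsAllocatedRuinSet A L l) (hr : 0 < r) (hX : ∀ i ω, 0 ≤ X i ω) (hτ : ∀ i ω, 0 ≤ τ i ω)
    {c : Fin d → ℝ → Ω → ℝ} {M : Fin d → ℝ} (hc₀ : ∀ k s ω, 0 ≤ c k s ω)
    (hcM : ∀ k s ω, c k s ω ≤ M k) {δv : Fin d → ℝ} (hδ : ∀ k, 0 ≤ δv k)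
    {Bm : Fin d → ℝ → Ω → ℝ} (hB : ∀ a > 0,
      (fun x => P.real {ω | ¬ IsRegularPath r τ Bm (a * x) ω}) =o[atTop] g) :
    Asymptotics.IsEquivalent atTop
      (fun x => P.real {ω | ∃ t : ℝ, 0 ≤ t ∧ surplus r x l c δv Bm X τ t ω ∈ L})
      (weightedTailSum P (fun i ω => projA A (X i ω)) fun i ω => Real.exp (-(r * τ i ω))) := by
  obtain ⟨U, hδU, hU⟩ := ((eventually_forall_le_mul (a := δv) hL.allocation_pos).and
    (eventually_gt_atTop 0)).exists
  have premium_small : ∀ ε > 0, ∀ᶠ x in atTop, ∀ k, M k / r ≤ x * (ε / 2 * l k) := fun ε hε =>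
    eventually_forall_le_mul fun k => mul_pos (half_pos hε) (hL.allocation_pos k)
  have surplus_mem {ε x ω t} (hε : 0 < ε) (hx : 0 < x) (hM : ∀ k, M k / r ≤ x * (ε / 2 * l k))
      (hω : IsRegularPath r τ Bm (ε / (6 * U) * x) ω) (ht : 0 ≤ t) :=
    hω.surplus_mem_Icc hr hε hU hx (hc₀ · · ω) (hcM · · ω) hM hδ hδU ht (X := X)
  refine h.isEquivalent_of_subset (E := fun ε x => {ω | ¬ IsRegularPath r τ Bm (ε / (6 * U) * x) ω})
    (fun ε hε => hB _ (by positivity)) (fun ε ⟨hε, hε₁⟩ => ?_) (fun ε hε => ?_)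
  · filter_upwards [premium_small ε hε, eventually_gt_atTop 0] with x hM hx
    rintro ω ⟨t, ht, ruin⟩
    refine or_iff_not_imp_left.2 fun hω => ?_
    have regular := not_not.1 hω
    exact hL.exists_lt_sum_of_sub_Dfin_mem regular.tendsto_arrival (mul_pos (by linarith) hx)
      (hL.mem_of_le ruin (surplus_mem hε hx hM regular ht).1)
  · filter_upwards [premium_small ε hε, eventually_gt_atTop 0] with x hM hx
    rintro ω ⟨i, big_claim⟩
    refine or_iff_not_imp_right.2 fun hω => ?_
    have regular := not_not.1 hω
    exact ⟨τ i ω, hτ i ω, hL.mem_of_le (hL.sub_Dfin_mem_of_lt (hX · ω) regular.tendsto_arrival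
      (by positivity) big_claim) (surplus_mem hε hx hM regular (hτ i ω)).2⟩

lemma IsAllocatedRuinSet.eventually_tsum_measure_eq_weightedTailSum (h : IsAllocatedRuinSet A L l) :
    ∀ᶠ x : ℝ in atTop, ∑' i, P.real {ω | Real.exp (-(r * τ i ω)) • X i ω ∈ x • A} =
      weightedTailSum P (fun i ω => projA A (X i ω)) (fun i ω => Real.exp (-(r * τ i ω))) x := by
  filter_upwards [eventually_gt_atTop 0] with x hx
  simp only [weightedTailSum, h.smul_mem_smul_iff_lt (Real.exp_pos _) hx]

lemma WeightedSumModel.eventually_weightedTailSum_ne_zero [IsProbabilityMeasure P] {g : ℝ → ℝ}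
    {Y θ : ℕ → Ω → ℝ} (h : WeightedSumModel P g Y θ p q) :
    ∀ᶠ x in atTop, weightedTailSum P Y θ x ≠ 0 := by
  obtain ⟨c, hc, lower⟩ := h.exists_mul_tail_le_weightedTailSum
  filter_upwards [lower] with x hx
  exact ((mul_pos hc (h.tail_pos x)).trans_le hx).ne'

end Model

lemma exists_moment_order {J q₂ : ℝ} (hJ : J < q₂) {a b : ℕ → ℝ} (ha : ∀ i, 0 ≤ a i)
    (hsum : Summable fun i => max (a i) (b i) ^ ((1 : ℝ) / if J < 1 then 1 else q₂)) :
    ∃ p, 1 ≤ p ∧ J < p ∧ Summable fun i => a i ^ (1 / p) := by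
  have bounds : 1 ≤ (if J < 1 then 1 else q₂) ∧ J < if J < 1 then 1 else q₂ := by
    split_ifs with hJ₁
    · exact ⟨le_rfl, hJ₁⟩
    · exact ⟨(not_lt.1 hJ₁).trans hJ.le, hJ⟩
  refine ⟨_, bounds.1, bounds.2, .of_nonneg_of_le (fun i => Real.rpow_nonneg (ha i) _)
    (fun i => ?_) hsum⟩
  have exponent_nonneg := one_div_nonneg.2 (zero_le_one.trans bounds.1)
  exact Real.rpow_le_rpow (ha i) (le_max_left _ _) exponent_nonneg

theorem statement17_general {Ω : Type*} [MeasurableSpace Ω] {P : Measure Ω}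
    [IsProbabilityMeasure P] {d : ℕ} {A L : Set (Fin d → ℝ)} {l : Fin d → ℝ}
    (hL : IsAllocatedRuinSet A L l) {r : ℝ} (hr : 0 < r) {F : Measure (Fin d → ℝ)}
    {X : ℕ → Ω → Fin d → ℝ} {τ : ℕ → Ω → ℝ}
    (hXmeas : ∀ i, Measurable (X i)) (hτmeas : ∀ i, Measurable (τ i))
    (hXnn : ∀ i ω, 0 ≤ X i ω) (hXdist : ∀ i, P.map (X i) = F) (hτnn : ∀ i ω, 0 ≤ τ i ω)
    (hindep : ∀ i, IndepFun (X i) (τ i) P)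
    (hFpos : ∀ x : ℝ, 0 < tailA A F x) (hFC : ClassC (tailA A F))
    {p q : ℝ} (hp : 1 ≤ p) (hJp : Jplus (tailA A F) < p)
    (hq : 0 < q) (hqJ : q < Jminus (tailA A F))
    (hmom : Summable fun i => (∫ ω, Real.exp (-(q * (r * τ i ω))) ∂P) ^ (1 / p))
    (hQAI : QAIA P A X)
    {c : Fin d → ℝ → Ω → ℝ} {M : Fin d → ℝ}
    (hcnn : ∀ k s ω, 0 ≤ c k s ω) (hcbd : ∀ k s ω, c k s ω ≤ M k)
    (hcmeas : ∀ k ω, Measurable fun s => c k s ω)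
    {δv : Fin d → ℝ} (hδv : ∀ k, 0 ≤ δv k) {Bm : Fin d → ℝ → Ω → ℝ}
    (hB0 : ∀ k ω, Bm k 0 ω = 0) (hBmeas : ∀ k t, Measurable (Bm k t))
    (hBcont : ∀ᵐ ω ∂P, ∀ k, Continuous fun t => Bm k t ω)
    (hBgauss : ∀ k, ∀ s t : ℝ, 0 ≤ s → s < t →
      P.map (fun ω => Bm k t ω - Bm k s ω) = gaussianReal 0 (t - s).toNNReal) :
    Tendsto (fun x : ℝ =>
        P.real {ω | ∃ t : ℝ, 0 ≤ t ∧ surplus r x l c δv Bm X τ t ω ∈ L} /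
          ∑' i : ℕ, P.real {ω | Real.exp (-(r * τ i ω)) • X i ω ∈ x • A})
      atTop (𝓝 1) := by
  have model := hL.weightedSumModel hr hXmeas hτmeas hXdist hτnn hindep hFpos hFC hp hJp hq hqJ
    hmom hQAI
  have ruin_equivalent := model.isEquivalent_ruin hL hr hXnn hτnn hcnn hcbd hδv fun a ha =>
    model.isLittleO_measure_not_isRegularPath hr hB0 hBmeas hBcont hBgauss ha
  refine ((Asymptotics.isEquivalent_iff_tendsto_one model.eventually_weightedTailSum_ne_zero).1
    ruin_equivalent).congr' ?_
  filter_upwards [hL.eventually_tsum_measure_eq_weightedTailSum (P := P)] with x hx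
  rw [hx, Pi.div_apply]

/-- Corollary 4.2(i): infinite-time ruin probability asymptotics,
`ψ_{l,L}(x;∞) ∼ ∫₀^∞ P(X e^{−rs} ∈ x A) m(ds) = ∑ᵢ P(X⁽ⁱ⁾ e^{−r τᵢ} ∈ x A)`. -/
theorem statement17
    {Ω : Type*} [MeasurableSpace Ω] (P : Measure Ω) [IsProbabilityMeasure P]
    {d : ℕ} (hd : 1 ≤ d) {A : Set (Fin d → ℝ)} (hA : InRfam d A)
    {r : ℝ} (hr : 0 < r)
    (F : Measure (Fin d → ℝ)) [IsProbabilityMeasure F]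
    (X : ℕ → Ω → Fin d → ℝ) (τ : ℕ → Ω → ℝ)
    (hXmeas : ∀ i, Measurable (X i)) (hτmeas : ∀ i, Measurable (τ i))
    (hXnn : ∀ i ω k, 0 ≤ X i ω k)
    (hXdist : ∀ i, P.map (X i) = F)
    (hτnn : ∀ i ω, 0 ≤ τ i ω) (hτmono : ∀ i ω, τ i ω ≤ τ (i + 1) ω)
    (hindep : IndepFun (fun ω i => X i ω) (fun ω i => τ i ω) P)
    (hFpos : ∀ x : ℝ, 0 < tailA A F x)
    (hFC : ClassC (tailA A F)) (hFPD : ClassPD (tailA A F))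
    (hmom : ∃ q₁ q₂ : ℝ, 0 < q₁ ∧ q₁ < Jminus (tailA A F) ∧
      Jminus (tailA A F) ≤ Jplus (tailA A F) ∧ Jplus (tailA A F) < q₂ ∧
      Summable (fun i : ℕ =>
        (max (∫ ω, Real.exp (-(q₁ * (r * τ i ω))) ∂P)
            (∫ ω, Real.exp (-(q₂ * (r * τ i ω))) ∂P)) ^
          ((1 : ℝ) / (if Jplus (tailA A F) < 1 then 1 else q₂))))
    (hQAI : QAIA P A X)
    (L : Set (Fin d → ℝ)) (hLopen : IsOpen L)
    (hLdec : ∀ z ∈ L, ∀ w : Fin d → ℝ, (∀ k, 0 ≤ w k) → z - w ∈ L)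
    (hL0 : (0 : Fin d → ℝ) ∈ frontier L)
    (hLconv : Convex ℝ Lᶜ)
    (hLcone : ∀ y : ℝ, 0 < y → y • L = L)
    (l : Fin d → ℝ) (hl : ∀ k, 0 < l k) (hl1 : ∀ k, l k ≤ 1) (hlsum : ∑ k, l k = 1)
    (hAdef : A = (fun z => l - z) '' L)
    (c : Fin d → ℝ → Ω → ℝ) (M : Fin d → ℝ)
    (hcnn : ∀ k s ω, 0 ≤ c k s ω) (hcbd : ∀ k s ω, c k s ω ≤ M k)
    (hcmeas : ∀ k, Measurable fun p : ℝ × Ω => c k p.1 p.2)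
    (δv : Fin d → ℝ) (hδv : ∀ k, 0 ≤ δv k)
    (Bm : Fin d → ℝ → Ω → ℝ)
    (hB0 : ∀ k ω, Bm k 0 ω = 0)
    (hBmeas : ∀ k t, Measurable (Bm k t))
    (hBcont : ∀ᵐ ω ∂P, ∀ k, Continuous fun t => Bm k t ω)
    (hBgauss : ∀ k, ∀ s t : ℝ, 0 ≤ s → s < t →
      P.map (fun ω => Bm k t ω - Bm k s ω) = gaussianReal 0 (Real.toNNReal (t - s)))
    (hBpast : ∀ k, ∀ s t : ℝ, 0 ≤ s → s < t →
      IndepFun (fun ω => Bm k t ω - Bm k s ω) (fun ω => fun u : Iic s => Bm k u.1 ω) P)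
    (hBindep : IndepFun (fun ω => fun p : Fin d × ℝ => Bm p.1 p.2 ω)
      (fun ω => ((fun i : ℕ => X i ω), (fun i : ℕ => τ i ω),
        (fun p : Fin d × ℝ => c p.1 p.2 ω))) P)
    :
    Tendsto (fun x : ℝ =>
        (P {ω | ∃ t : ℝ, 0 ≤ t ∧ surplus r x l c δv Bm X τ t ω ∈ L}).toReal /
          ∑' i : ℕ, (P {ω | Real.exp (-(r * τ i ω)) • X i ω ∈ x • A}).toReal)
      atTop (𝓝 1) := by
  obtain ⟨q₁, q₂, hq₁, hq₁J, -, hJq₂, hsum⟩ := hmom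
  obtain ⟨p, hp, hJp, hmom⟩ := exists_moment_order hJq₂
    (fun i => integral_nonneg fun ω => (Real.exp_pos _).le) hsum
  exact statement17_general ⟨hLopen, hLdec, hL0, hLconv, hLcone, hl, hAdef⟩ hr hXmeas hτmeas hXnn
    hXdist hτnn (fun i => hindep.comp (measurable_pi_apply i) (measurable_pi_apply i)) hFpos hFC hp
    hJp hq₁ hq₁J hmom hQAI hcnn hcbd (fun k _ => (hcmeas k).comp measurable_prodMk_right) hδv hB0
    hBmeas hBcont hBgauss
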